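/- arXiv:1510.04911 — 11 statements merged into one kernel-verified Lean document; each statement's English description precedes it below -/
import Mathlib

section
/- Let p, q, r be positive integers with gcd(q,r) = 1. For every integer j with 0 ≤ j < pqr, the coefficient a_j of X^j in Q_{p,q,r} equals r_{q,r}(j) − r_{q,r}(j−1), where r_{q,r}(−1) is interpreted as 0. -/
open Polynomial

/-- `repCount q r n` is the number of pairs `(l, m)` of nonnegative integers with
`l*q + m*r = n`. -/
noncomputable def repCount (q r n : ℕ) : ℕ := Nat.card {lm : ℕ × ℕ // lm.1 * q + lm.2 * r = n}

theorem geo_aux (q : ℕ) (hq : 0 < q) :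
    ((1 : PowerSeries ℤ) - PowerSeries.X ^ q) *
      PowerSeries.mk (fun n => if q ∣ n then (1 : ℤ) else 0) = 1 := by
  ext n
  rw [sub_mul, one_mul, map_sub, PowerSeries.coeff_X_pow_mul', PowerSeries.coeff_one]
  simp only [PowerSeries.coeff_mk]
  by_cases h : q ≤ n
  · obtain ⟨m, rfl⟩ := Nat.exists_eq_add_of_le h
    have h2 : q + m ≠ 0 := by omega
    simp [h2]
    omega
  · by_cases h0 : n = 0
    · subst h0
      simp [hq.ne']
    · have h1 : ¬ q ∣ n := fun hd => h (Nat.le_of_dvd (Nat.pos_of_ne_zero h0) hd)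
      simp [h, h0, h1]

theorem rep_aux (q r n : ℕ) (hq : 0 < q) (hr : 0 < r) :
    PowerSeries.coeff n (PowerSeries.mk (fun n => if q ∣ n then (1 : ℤ) else 0) *
      PowerSeries.mk (fun n => if r ∣ n then (1 : ℤ) else 0)) = (repCount q r n : ℤ) := by
  have key : repCount q r n =
      ((Finset.HasAntidiagonal.antidiagonal n).filter (fun x => q ∣ x.1 ∧ r ∣ x.2)).card := by
    unfold repCount
    rw [← Nat.card_eq_finsetCard]
    refine Nat.card_eq_of_bijective
      (fun x => ⟨(x.1.1 * q, x.1.2 * r), by simp [x.2]⟩) ⟨?_, ?_⟩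
    · rintro ⟨⟨a, b⟩, h⟩ ⟨⟨c, d⟩, h'⟩ e
      simp only [Subtype.mk.injEq, Prod.mk.injEq] at e ⊢
      exact ⟨Nat.eq_of_mul_eq_mul_right hq e.1, Nat.eq_of_mul_eq_mul_right hr e.2⟩
    · rintro ⟨⟨a, b⟩, h⟩
      simp only [Finset.mem_filter, Finset.HasAntidiagonal.mem_antidiagonal] at h
      obtain ⟨h, ⟨c, rfl⟩, ⟨d, rfl⟩⟩ := h
      exact ⟨⟨(c, d), by simpa [mul_comm] using h⟩, by simp [mul_comm]⟩
  rw [PowerSeries.coeff_mul, key, Finset.card_filter]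
  push_cast
  refine Finset.sum_congr rfl fun x _ => ?_
  by_cases h1 : q ∣ x.1 <;> by_cases h2 : r ∣ x.2 <;> simp [h1, h2]

/-- For `0 ≤ j < pqr`, the coefficient `a_j` of the quotient polynomial
`Q = (1-X)(1-X^(pqr))/((1-X^q)(1-X^r))` equals `r_{q,r}(j) - r_{q,r}(j-1)`,
where `r_{q,r}(-1)` is interpreted as `0`. -/
theorem stmt_2 (p q r : ℕ) (hp : 0 < p) (hq : 0 < q) (hr : 0 < r)
    (hqr : Nat.gcd q r = 1) (Q : ℤ[X])
    (hQ : (1 - X ^ q) * (1 - X ^ r) * Q = (1 - X) * (1 - X ^ (p * q * r)))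
    (j : ℕ) (hj : j < p * q * r) :
    Q.coeff j =
      (repCount q r j : ℤ) - (if j = 0 then 0 else (repCount q r (j - 1) : ℤ)) := by
  have h := congrArg (fun P : ℤ[X] => (P : PowerSeries ℤ)) hQ
  simp only [Polynomial.coe_mul, Polynomial.coe_sub, Polynomial.coe_one, Polynomial.coe_pow,
    Polynomial.coe_X] at h
  have hA := geo_aux q hq
  have hB := geo_aux r hr
  have hF := fun n => rep_aux q r n hq hr
  set A := PowerSeries.mk (fun n => if q ∣ n then (1 : ℤ) else 0)
  set B := PowerSeries.mk (fun n => if r ∣ n then (1 : ℤ) else 0)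
  have e : (Q : PowerSeries ℤ) = A * B - PowerSeries.X ^ 1 * (A * B)
      - PowerSeries.X ^ (p * q * r) * ((1 - PowerSeries.X) * (A * B)) := by
    calc (Q : PowerSeries ℤ) = ((1 - PowerSeries.X ^ q) * A) * ((1 - PowerSeries.X ^ r) * B) * (Q : PowerSeries ℤ) := by
          rw [hA, hB]; ring
      _ = ((1 - PowerSeries.X ^ q) * (1 - PowerSeries.X ^ r) * (Q : PowerSeries ℤ)) * (A * B) := by ring
      _ = _ := by rw [h]; ring
  rw [← Polynomial.coeff_coe, e, map_sub, map_sub, PowerSeries.coeff_X_pow_mul',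
    PowerSeries.coeff_X_pow_mul', hF, hF, if_neg (not_le.mpr hj), sub_zero]
  by_cases h0 : j = 0
  · simp [h0]
  · rw [if_pos (by omega : 1 ≤ j), if_neg h0]
end

section
/- Let q and r be coprime integers with q ≥ 2 and r ≥ 2, and let A be a complex number with A^{qr} = 1, A^q ≠ 1 and A^r ≠ 1. Then Σ_{j=0}^{(q−1)(r−1)} (r_{q,r}(j) − r_{q,r}(j−1)) A^j = 0, where r_{q,r}(−1) is interpreted as 0. -/
open Polynomial in
lemma aux_geom_dvd (q n : ℕ) (h : q ∣ n) :
    (∑ i ∈ Finset.range q, (X : ℂ[X]) ^ i) ∣ ∑ i ∈ Finset.range n, (X : ℂ[X]) ^ i := by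
  have h1 : (X : ℂ[X]) - 1 ≠ 0 := X_sub_C_ne_zero (1 : ℂ)
  rw [← mul_dvd_mul_iff_right h1, geom_sum_mul, geom_sum_mul]
  obtain ⟨k, rfl⟩ := h
  rw [pow_mul]
  exact sub_one_dvd_pow_sub_one _ k

open Polynomial in
lemma aux_coprime (q r : ℕ) (hr : 2 ≤ r) (hqr : Nat.gcd q r = 1) :
    IsCoprime (∑ i ∈ Finset.range q, (X : ℂ[X]) ^ i) (∑ i ∈ Finset.range r, (X : ℂ[X]) ^ i) := by
  have h1 : (X : ℂ[X]) - 1 ≠ 0 := X_sub_C_ne_zero (1 : ℂ)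
  obtain ⟨a, -, ha⟩ := Nat.exists_mul_mod_eq_one_of_coprime (k := r) (n := q) hqr (by omega)
  have hb : q * a = r * (q * a / r) + 1 := by
    have := Nat.div_add_mod (q * a) r
    omega
  obtain ⟨u, hu⟩ := aux_geom_dvd q (q * a) ⟨a, rfl⟩
  obtain ⟨v, hv⟩ := aux_geom_dvd r (r * (q * a / r)) ⟨_, rfl⟩
  refine ⟨u, - X * v, ?_⟩
  rw [mul_comm u, ← hu, mul_assoc, mul_comm v, ← hv]
  have h3 : ∑ i ∈ Finset.range (q * a), (X : ℂ[X]) ^ i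
      = X * ∑ i ∈ Finset.range (r * (q * a / r)), (X : ℂ[X]) ^ i + 1 :=
    (congrArg (fun n => ∑ i ∈ Finset.range n, (X : ℂ[X]) ^ i) hb).trans geom_sum_succ
  rw [h3]
  ring

noncomputable def auxS (q : ℕ) : PowerSeries ℂ := PowerSeries.mk fun n => if q ∣ n then 1 else 0

lemma auxS_mul (q : ℕ) (hq : 0 < q) : auxS q * (1 - PowerSeries.X ^ q) = 1 := by
  ext n
  rw [mul_sub, mul_one, map_sub, PowerSeries.coeff_mul_X_pow', PowerSeries.coeff_one]
  simp only [auxS, PowerSeries.coeff_mk]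
  by_cases h : q ≤ n
  · have : q ∣ n - q ↔ q ∣ n := by
      rw [Nat.dvd_sub_iff_left h dvd_rfl]
    have h0 : n ≠ 0 := by omega
    simp [h, this, h0]
  · by_cases h0 : n = 0
    · subst h0; simp [hq.ne']
    · have : ¬ q ∣ n := fun hd => h (Nat.le_of_dvd (by omega) hd)
      simp [h, h0, this]

lemma aux_coeff (q r n : ℕ) (hq : 0 < q) (hr : 0 < r) :
    PowerSeries.coeff n (auxS q * auxS r) = (repCount q r n : ℂ) := by
  rw [PowerSeries.coeff_mul]
  simp only [auxS, PowerSeries.coeff_mk, ← ite_and, mul_ite, mul_one, mul_zero]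
  rw [Finset.sum_boole]
  congr 1
  rw [repCount, ← Nat.card_eq_finsetCard]
  refine (Nat.card_congr (Equiv.ofBijective (fun x => ⟨(x.1.1 * q, x.1.2 * r), by simp [x.2]⟩) ⟨?_, ?_⟩)).symm
  · rintro ⟨⟨a, b⟩, h⟩ ⟨⟨c, d⟩, h'⟩ he
    simp [hq.ne', hr.ne'] at he
    simp [he]
  · rintro ⟨⟨a, b⟩, h⟩
    have hh := Finset.mem_filter.1 h
    have hs : a + b = n := by simpa using hh.1
    obtain ⟨h1, h2, h3⟩ : a + b = n ∧ q ∣ a ∧ r ∣ b := ⟨hs, hh.2.2, hh.2.1⟩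
    obtain ⟨c, rfl⟩ := h2
    obtain ⟨d, rfl⟩ := h3
    exact ⟨⟨(c, d), by simp only; linarith⟩, by simp [mul_comm]⟩

theorem stmt_8 (q r : ℕ) (hq : 2 ≤ q) (hr : 2 ≤ r) (hqr : Nat.gcd q r = 1)
    (A : ℂ) (hA : A ^ (q * r) = 1) (hAq : A ^ q ≠ 1) (hAr : A ^ r ≠ 1) :
    ∑ j ∈ Finset.range ((q - 1) * (r - 1) + 1),
      ((repCount q r j : ℂ) - (if j = 0 then 0 else (repCount q r (j - 1) : ℂ))) * A ^ j
      = 0 := by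
  obtain ⟨P, hP⟩ := (aux_coprime q r hr hqr).mul_dvd (aux_geom_dvd q (q * r) ⟨r, rfl⟩)
    (aux_geom_dvd r (q * r) ⟨q, mul_comm _ _⟩)
  have hPX : (1 - Polynomial.X ^ q) * (1 - Polynomial.X ^ r) * P
      = (1 - Polynomial.X) * (1 - Polynomial.X ^ (q * r)) := by
    rw [← mul_neg_geom_sum Polynomial.X q, ← mul_neg_geom_sum Polynomial.X r,
      ← mul_neg_geom_sum Polynomial.X (q * r), hP]
    ring
  have hdeg : P.natDegree = (q - 1) * (r - 1) := by
    have m : ∀ n, n ≠ 0 → (∑ i ∈ Finset.range n, (Polynomial.X : Polynomial ℂ) ^ i).Monic :=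
      fun n hn => Polynomial.monic_geom_sum_X hn
    have d : ∀ n, n ≠ 0 →
        (∑ i ∈ Finset.range n, (Polynomial.X : Polynomial ℂ) ^ i).natDegree = n - 1 := by
      intro n hn
      have h1 := Polynomial.natDegree_mul (m n hn).ne_zero (Polynomial.X_sub_C_ne_zero (1 : ℂ))
      rw [Polynomial.natDegree_X_sub_C, Polynomial.C_1, geom_sum_mul, ← Polynomial.C_1,
        Polynomial.natDegree_X_pow_sub_C] at h1
      omega
    have hqr0 : q * r ≠ 0 := by positivity
    have hP0 : P ≠ 0 := by
      rintro rfl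
      rw [mul_zero] at hP
      exact (m _ hqr0).ne_zero hP
    have h2 := congrArg Polynomial.natDegree hP
    rw [Polynomial.natDegree_mul ((m q (by omega)).mul (m r (by omega))).ne_zero hP0,
      (m q (by omega)).natDegree_mul (m r (by omega)), d _ hqr0, d q (by omega),
      d r (by omega)] at h2
    obtain ⟨a, rfl⟩ : ∃ a, q = a + 1 := ⟨q - 1, by omega⟩
    obtain ⟨b, rfl⟩ : ∃ b, r = b + 1 := ⟨r - 1, by omega⟩
    have : (a + 1) * (b + 1) - 1 = a * b + a + b := by
      rw [show (a + 1) * (b + 1) = a * b + a + b + 1 by ring]; rfl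
    simp only [Nat.add_sub_cancel] at *
    omega
  have hlt : (q - 1) * (r - 1) < q * r :=
    Nat.mul_lt_mul_of_lt_of_le (by omega) (by omega) (by omega)
  have hser : (P : PowerSeries ℂ) = (auxS q * auxS r) * (1 - PowerSeries.X)
      * (1 - PowerSeries.X ^ (q * r)) := by
    have h := congrArg (fun p : Polynomial ℂ => (p : PowerSeries ℂ)) hPX
    simp only [Polynomial.coe_mul, Polynomial.coe_sub, Polynomial.coe_one, Polynomial.coe_pow,
      Polynomial.coe_X] at h
    rw [mul_assoc (auxS q * auxS r), ← h]
    have e1 := auxS_mul q (by omega)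
    have e2 := auxS_mul r (by omega)
    linear_combination (-((P : PowerSeries ℂ) * (auxS r * (1 - PowerSeries.X ^ r)))) * e1 - (P : PowerSeries ℂ) * e2
  have heval : P.eval A = 0 := by
    have h := congrArg (Polynomial.eval A) hPX
    simp only [Polynomial.eval_mul, Polynomial.eval_sub, Polynomial.eval_one, Polynomial.eval_pow,
      Polynomial.eval_X, hA, sub_self, mul_zero] at h
    rcases mul_eq_zero.1 h with h | h
    · rcases mul_eq_zero.1 h with h | h
      · exact absurd (sub_eq_zero.1 h).symm hAq
      · exact absurd (sub_eq_zero.1 h).symm hAr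
    · exact h
  rw [Polynomial.eval_eq_sum_range, hdeg] at heval
  refine Eq.trans ?_ heval
  refine Finset.sum_congr rfl fun j hj => ?_
  have hj' : ¬ q * r ≤ j := by rw [Finset.mem_range] at hj; omega
  congr 1
  rw [← Polynomial.coeff_coe, hser, mul_sub, mul_one, map_sub, PowerSeries.coeff_mul_X_pow',
    if_neg hj', sub_zero, mul_sub, mul_one, map_sub, aux_coeff q r j (by omega) (by omega)]
  congr 1
  cases j with
  | zero => simp
  | succ j => simp [PowerSeries.coeff_succ_mul_X, aux_coeff q r j (by omega) (by omega)]
end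

section
/- Let q and r be coprime integers with q ≥ 2 and r ≥ 2. For each integer ℓ with 0 ≤ ℓ ≤ r−2, let m_ℓ denote the smallest nonnegative integer m such that ℓq + mr ≥ (q−1)(r−1). Then the set {ℓq + m_ℓ r : ℓ = 0, …, r−2} equals the set {(q−1)(r−1) + k : k = 0, …, r−2}. -/
theorem aux_inj (q r l1 l2 m1 m2 : ℕ) (hqr : Nat.gcd q r = 1) (h1 : l1 < r) (h2 : l2 < r)
    (h : l1 * q + m1 * r = l2 * q + m2 * r) : l1 = l2 := by
  have h3 : l1 * q ≡ l2 * q [MOD r] := by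
    have := congrArg (· % r) h
    simpa [Nat.ModEq] using this
  have h4 : l1 ≡ l2 [MOD r] :=
    Nat.ModEq.cancel_right_of_coprime (by rw [Nat.gcd_comm]; exact hqr) h3
  exact Nat.ModEq.eq_of_lt_of_lt h4 h1 h2

/-- Let `q, r ≥ 2` be coprime and for `0 ≤ ℓ ≤ r-2` let `m ℓ` be the least
nonnegative integer `x` with `ℓq + xr ≥ (q-1)(r-1)`. Then
`{ℓq + (m ℓ)r : ℓ = 0, …, r-2} = {(q-1)(r-1) + k : k = 0, …, r-2}`. -/
theorem stmt_9 (q r : ℕ) (hq : 2 ≤ q) (hr : 2 ≤ r) (hqr : Nat.gcd q r = 1)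
    (m : ℕ → ℕ)
    (hm : ∀ ℓ ≤ r - 2, IsLeast {x : ℕ | (q - 1) * (r - 1) ≤ ℓ * q + x * r} (m ℓ)) :
    Finset.image (fun ℓ => ℓ * q + m ℓ * r) (Finset.range (r - 1)) =
    Finset.image (fun k => (q - 1) * (r - 1) + k) (Finset.range (r - 1)) := by
  apply Finset.eq_of_subset_of_card_le
  · intro v hv
    simp only [Finset.mem_image, Finset.mem_range] at hv ⊢
    obtain ⟨l, hl, rfl⟩ := hv
    obtain ⟨h1, h2⟩ := hm l (by omega)
    simp only [Set.mem_setOf_eq] at h1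
    have hne : l * q + m l * r ≠ (r - 1) * q + 0 * r := fun h => by
      have := aux_inj q r l (r - 1) (m l) 0 hqr (by omega) (by omega) h
      omega
    have e : (r - 1) * q = (q - 1) * (r - 1) + (r - 1) := by
      obtain ⟨a, rfl⟩ : ∃ a, q = a + 1 := ⟨q - 1, by omega⟩
      simp only [Nat.add_sub_cancel]; ring
    have hlt : l * q + m l * r < (q - 1) * (r - 1) + r := by
      rcases Nat.eq_zero_or_pos (m l) with h0 | h0
      · have := Nat.mul_le_mul_right q hl.le
        rw [h0]; omega
      · by_contra hc
        obtain ⟨k, hk⟩ : ∃ k, m l = k + 1 := ⟨m l - 1, by omega⟩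
        have h4 : k ∈ {x : ℕ | (q - 1) * (r - 1) ≤ l * q + x * r} := by
          simp only [Set.mem_setOf_eq]
          rw [hk, Nat.succ_mul] at hc
          omega
        have := h2 h4
        omega
    exact ⟨l * q + m l * r - (q - 1) * (r - 1), by omega, by omega⟩
  · rw [Finset.card_image_of_injective _ (add_right_injective _), Finset.card_image_of_injOn]
    intro a ha b hb h
    simp only [Finset.coe_range, Set.mem_Iio] at ha hb
    exact aux_inj q r a b (m a) (m b) hqr (by omega) (by omega) h
end

section
/- Let T1, T2, T3 be positive integers with gcd(T1,T2,T3) = 1, and set d12 = gcd(T1,T2), d23 = gcd(T2,T3), d13 = gcd(T1,T3). Then (1−X^{d12})(1−X^{d23})(1−X^{d13}) divides (1−X^{T1})(1−X^{T2})(1−X^{T3}) in ℤ[X], and the quotient polynomial P_3 has degree T1+T2+T3−d12−d23−d13 and all its coefficients are nonnegative. -/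
open Polynomial

lemma geo_aux_s10 (d T : ℕ) (hT : 0 < T) (h : d ∣ T) :
    ∃ Q : ℤ[X], (1 - X ^ d) * Q = 1 - X ^ T ∧ ∀ k, 0 ≤ Q.coeff k := by
  obtain ⟨m, rfl⟩ := h
  refine ⟨∑ i ∈ Finset.range m, (X ^ d) ^ i, ?_, ?_⟩
  · rw [mul_neg_geom_sum, ← pow_mul]
  · intro k
    rw [finset_sum_coeff]
    refine Finset.sum_nonneg fun i _ => ?_
    rw [← pow_mul, coeff_X_pow]
    split_ifs <;> simp

lemma coeff_mul_nonneg_aux (P Q : ℤ[X]) (hP : ∀ k, 0 ≤ P.coeff k) (hQ : ∀ k, 0 ≤ Q.coeff k) :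
    ∀ k, 0 ≤ (P * Q).coeff k := by
  intro k
  rw [coeff_mul]
  exact Finset.sum_nonneg fun i _ => mul_nonneg (hP _) (hQ _)

lemma deg_aux (n : ℕ) : (1 - X ^ n : ℤ[X]).natDegree = n := by
  rw [← natDegree_neg, neg_sub]
  exact natDegree_X_pow_sub_C (r := (1 : ℤ))

lemma ne_aux (n : ℕ) (hn : 0 < n) : (1 - X ^ n : ℤ[X]) ≠ 0 := by
  intro h
  have := deg_aux n
  rw [h, natDegree_zero] at this
  omega



/-- For positive integers `T1, T2, T3` with `gcd(T1,T2,T3) = 1`, the polynomial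
`(1-X^d12)(1-X^d23)(1-X^d13)` divides `(1-X^T1)(1-X^T2)(1-X^T3)` in `ℤ[X]`, and the
quotient `P_3` has degree `T1+T2+T3-d12-d23-d13` and nonnegative coefficients. -/
theorem stmt_10 (T1 T2 T3 : ℕ) (h1 : 0 < T1) (h2 : 0 < T2) (h3 : 0 < T3)
    (hgcd : Nat.gcd (Nat.gcd T1 T2) T3 = 1)
    (d12 d23 d13 : ℕ) (hd12 : d12 = Nat.gcd T1 T2) (hd23 : d23 = Nat.gcd T2 T3)
    (hd13 : d13 = Nat.gcd T1 T3) :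
    ((1 - X ^ d12) * (1 - X ^ d23) * (1 - X ^ d13) : ℤ[X]) ∣
      (1 - X ^ T1) * (1 - X ^ T2) * (1 - X ^ T3) ∧
    ∀ P : ℤ[X],
      (1 - X ^ d12) * (1 - X ^ d23) * (1 - X ^ d13) * P =
        (1 - X ^ T1) * (1 - X ^ T2) * (1 - X ^ T3) →
      P.natDegree = T1 + T2 + T3 - d12 - d23 - d13 ∧ ∀ k, 0 ≤ P.coeff k := by
  have p12 : 0 < d12 := hd12 ▸ Nat.gcd_pos_of_pos_left _ h1
  have p23 : 0 < d23 := hd23 ▸ Nat.gcd_pos_of_pos_left _ h2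
  have p13 : 0 < d13 := hd13 ▸ Nat.gcd_pos_of_pos_left _ h1
  obtain ⟨A, hA, nA⟩ := geo_aux_s10 d12 T1 h1 (hd12 ▸ Nat.gcd_dvd_left _ _)
  obtain ⟨B, hB, nB⟩ := geo_aux_s10 d23 T2 h2 (hd23 ▸ Nat.gcd_dvd_left _ _)
  obtain ⟨C, hC, nC⟩ := geo_aux_s10 d13 T3 h3 (hd13 ▸ Nat.gcd_dvd_right _ _)
  have key : ((1 - X ^ d12) * (1 - X ^ d23) * (1 - X ^ d13) : ℤ[X]) * (A * B * C) =
      (1 - X ^ T1) * (1 - X ^ T2) * (1 - X ^ T3) := by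
    rw [← hA, ← hB, ← hC]; ring
  have n12 := ne_aux d12 p12
  have n23 := ne_aux d23 p23
  have n13 := ne_aux d13 p13
  have hD := mul_ne_zero (mul_ne_zero n12 n23) n13
  refine ⟨⟨_, key.symm⟩, fun P hP => ?_⟩
  constructor
  · have m1 := ne_aux T1 h1
    have m2 := ne_aux T2 h2
    have m3 := ne_aux T3 h3
    have hP0 : P ≠ 0 := by
      rintro rfl
      rw [mul_zero] at hP
      exact mul_ne_zero (mul_ne_zero m1 m2) m3 hP.symm
    have hdeg := congrArg natDegree hP
    rw [natDegree_mul hD hP0, natDegree_mul (mul_ne_zero n12 n23) n13, natDegree_mul n12 n23,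
      natDegree_mul (mul_ne_zero m1 m2) m3, natDegree_mul m1 m2] at hdeg
    simp only [deg_aux] at hdeg
    omega
  · have hPe : P = A * B * C := mul_left_cancel₀ hD (hP.trans key.symm)
    rw [hPe]
    exact coeff_mul_nonneg_aux _ _ (coeff_mul_nonneg_aux _ _ nA nB) nC
end

section
/- Let T1, T2, T3 be positive integers with gcd(T1,T2,T3) = 1, and suppose there exist distinct indices i ≠ j in {1,2,3} such that gcd(T_i,T_j) = 1 or gcd(T_i,T_j) = min(T_i,T_j). Then every coefficient c_k of P_3 with 0 ≤ k ≤ T1+T2+T3−d12−d23−d13 is strictly positive. -/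
open Polynomial

lemma step_aux (Q : ℤ[X]) (n e m : ℕ) (he : 0 < e) (hm : 0 < m) (hen : e ≤ n + 1)
    (h0 : ∀ k, 0 ≤ Q.coeff k) (hp : ∀ k ≤ n, 0 < Q.coeff k) :
    (∀ k, 0 ≤ (Q * ∑ i ∈ Finset.range m, (X ^ e) ^ i).coeff k) ∧
    (∀ k ≤ n + e * (m - 1), 0 < (Q * ∑ i ∈ Finset.range m, (X ^ e) ^ i).coeff k) := by
  have hc : ∀ k, (Q * ∑ i ∈ Finset.range m, (X ^ e) ^ i).coeff k =
      ∑ i ∈ Finset.range m, if e * i ≤ k then Q.coeff (k - e * i) else 0 := by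
    intro k
    rw [Finset.mul_sum, finset_sum_coeff]
    refine Finset.sum_congr rfl fun i _ => ?_
    rw [← pow_mul, coeff_mul_X_pow']
  have hn : ∀ k i, 0 ≤ (if e * i ≤ k then Q.coeff (k - e * i) else 0) := by
    intro k i
    split_ifs
    · exact h0 _
    · exact le_rfl
  refine ⟨fun k => ?_, fun k hk => ?_⟩
  · rw [hc]
    exact Finset.sum_nonneg fun i _ => hn k i
  · rw [hc]
    have hmod := Nat.div_add_mod k e
    have hlt := Nat.mod_lt k he
    refine Finset.sum_pos' (fun i _ => hn k i) ?_
    by_cases hq : k / e ≤ m - 1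
    · refine ⟨k / e, Finset.mem_range.2 (by omega), ?_⟩
      rw [if_pos (by omega)]
      exact hp _ (by omega)
    · refine ⟨m - 1, Finset.mem_range.2 (by omega), ?_⟩
      have : e * (m - 1) ≤ e * (k / e) := Nat.mul_le_mul_left _ (by omega)
      rw [if_pos (by omega)]
      exact hp _ (by omega)

lemma core_aux (a b c e f : ℕ) (ha : 0 < a) (hb : 0 < b) (hc : 0 < c)
    (hea : e ∣ a) (hec : e ∣ c) (hfb : f ∣ b) (hfc : f ∣ c) (P : ℤ[X])
    (hP : (1 - X) * (1 - X ^ e) * (1 - X ^ f) * P = (1 - X ^ a) * (1 - X ^ b) * (1 - X ^ c)) :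
    ∀ k, k + 1 + e + f ≤ a + b + c → 0 < P.coeff k := by
  have he := Nat.pos_of_dvd_of_pos hea ha
  have hf := Nat.pos_of_dvd_of_pos hfb hb
  have hec' := Nat.le_of_dvd hc hec
  have hfc' := Nat.le_of_dvd hc hfc
  obtain ⟨m, rfl⟩ := hea
  obtain ⟨l, rfl⟩ := hfb
  have hm : 0 < m := Nat.pos_of_mul_pos_left ha
  have hl : 0 < l := Nat.pos_of_mul_pos_left hb
  have hne : ∀ d : ℕ, 0 < d → (1 - X ^ d : ℤ[X]) ≠ 0 := by
    intro d hd h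
    have := congrArg (fun p => coeff p 0) h
    simp [coeff_X_pow, hd.ne] at this
  have hPe : P = (∑ i ∈ Finset.range c, X ^ i) * (∑ i ∈ Finset.range m, (X ^ e) ^ i) *
      (∑ i ∈ Finset.range l, (X ^ f) ^ i) := by
    have h1 := hne 1 one_pos
    rw [pow_one] at h1
    apply mul_left_cancel₀ (mul_ne_zero (mul_ne_zero h1 (hne e he)) (hne f hf))
    rw [hP, pow_mul, pow_mul, ← mul_neg_geom_sum (X : ℤ[X]) c,
      ← mul_neg_geom_sum ((X : ℤ[X]) ^ e) m, ← mul_neg_geom_sum ((X : ℤ[X]) ^ f) l]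
    ring
  have hq : ∀ k, (∑ i ∈ Finset.range c, (X : ℤ[X]) ^ i).coeff k = if k < c then 1 else 0 := by
    intro k
    simp [finset_sum_coeff, coeff_X_pow]
  have s1 := step_aux (∑ i ∈ Finset.range c, (X : ℤ[X]) ^ i) (c - 1) e m he hm (by omega)
    (by intro k; rw [hq]; split_ifs <;> simp)
    (by intro k hk; rw [hq, if_pos (by omega)]; simp)
  have s2 := step_aux _ _ f l hf hl (by omega) s1.1 s1.2
  intro k hk
  rw [hPe]
  apply s2.2
  obtain ⟨m, rfl⟩ := Nat.exists_eq_succ_of_ne_zero hm.ne'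
  obtain ⟨l, rfl⟩ := Nat.exists_eq_succ_of_ne_zero hl.ne'
  simp only [Nat.succ_eq_add_one, Nat.add_sub_cancel, mul_add, mul_one] at *
  omega

/-- If some pair of distinct indices satisfies `gcd(T_i,T_j) = 1` or
`gcd(T_i,T_j) = min(T_i,T_j)`, then every coefficient `c_k` of the quotient
polynomial `P_3` with `0 ≤ k ≤ T1+T2+T3-d12-d23-d13` is strictly positive. -/
theorem stmt_12 (T1 T2 T3 : ℕ) (h1 : 0 < T1) (h2 : 0 < T2) (h3 : 0 < T3)
    (hgcd : Nat.gcd (Nat.gcd T1 T2) T3 = 1)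
    (d12 d23 d13 : ℕ) (hd12 : d12 = Nat.gcd T1 T2) (hd23 : d23 = Nat.gcd T2 T3)
    (hd13 : d13 = Nat.gcd T1 T3)
    (hpair : (d12 = 1 ∨ d12 = min T1 T2) ∨ (d23 = 1 ∨ d23 = min T2 T3) ∨
      (d13 = 1 ∨ d13 = min T1 T3))
    (P : ℤ[X])
    (hP : (1 - X ^ d12) * (1 - X ^ d23) * (1 - X ^ d13) * P =
      (1 - X ^ T1) * (1 - X ^ T2) * (1 - X ^ T3)) :
    ∀ k ≤ T1 + T2 + T3 - d12 - d23 - d13, 0 < P.coeff k := by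
  have a1 : d12 ∣ T1 := hd12 ▸ Nat.gcd_dvd_left _ _
  have a2 : d12 ∣ T2 := hd12 ▸ Nat.gcd_dvd_right _ _
  have b2 : d23 ∣ T2 := hd23 ▸ Nat.gcd_dvd_left _ _
  have b3 : d23 ∣ T3 := hd23 ▸ Nat.gcd_dvd_right _ _
  have c1 : d13 ∣ T1 := hd13 ▸ Nat.gcd_dvd_left _ _
  have c3 : d13 ∣ T3 := hd13 ▸ Nat.gcd_dvd_right _ _
  have l1 := Nat.le_of_dvd h1 a1
  have l2 := Nat.le_of_dvd h2 b2
  have l3 := Nat.le_of_dvd h3 c3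
  have key : ∀ d, d ∣ T1 → d ∣ T2 → d ∣ T3 → d = 1 := by
    intro d x y z
    exact Nat.dvd_one.1 (hgcd ▸ Nat.dvd_gcd (Nat.dvd_gcd x y) z)
  have hone : d12 = 1 ∨ d23 = 1 ∨ d13 = 1 := by
    rcases hpair with (h | h) | (h | h) | (h | h)
    · exact Or.inl h
    · rcases min_choice T1 T2 with g | g <;> rw [g] at h <;> subst h
      · exact Or.inr (Or.inr (key _ c1 (c1.trans a2) c3))
      · exact Or.inr (Or.inl (key _ (b2.trans a1) b2 b3))
    · exact Or.inr (Or.inl h)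
    · rcases min_choice T2 T3 with g | g <;> rw [g] at h <;> subst h
      · exact Or.inl (key _ a1 a2 (a2.trans b3))
      · exact Or.inr (Or.inr (key _ c1 (c3.trans b2) c3))
    · exact Or.inr (Or.inr h)
    · rcases min_choice T1 T3 with g | g <;> rw [g] at h <;> subst h
      · exact Or.inl (key _ a1 a2 (a1.trans c3))
      · exact Or.inr (Or.inl (key _ (b3.trans c1) b2 b3))
  intro k hk
  rcases hone with h | h | h
  · rw [h, pow_one] at hP
    exact core_aux T1 T2 T3 d13 d23 h1 h2 h3 c1 c3 b2 b3 P (by linear_combination hP) k (by omega)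
  · rw [h, pow_one] at hP
    exact core_aux T2 T3 T1 d12 d13 h2 h3 h1 a2 a1 c3 c1 P (by linear_combination hP) k (by omega)
  · rw [h, pow_one] at hP
    exact core_aux T1 T3 T2 d12 d23 h1 h3 h2 a1 a2 b3 b2 P (by linear_combination hP) k (by omega)
end

section
/- Let T1, T2 be positive integers with d := gcd(T1,T2) satisfying d < T2 < T1, and set m = T2/d and T = T1+T2−d. Then for every integer k with 0 ≤ k ≤ T−1, the coefficient of X^k in the quotient polynomial P_2 = (1−X^{T1})(1−X^{T2})/((1−X)(1−X^d)) equals min(⌊k/d⌋+1, m, ⌊(T−1−k)/d⌋+1); that is, the coefficient sequence of P_2 is 1^d 2^d ⋯ (m−1)^d m^{T1−T2+d} (m−1)^d ⋯ 2^d 1^d, where a^b denotes b consecutive occurrences of the value a. -/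
open Polynomial

theorem aux_count (m q n : ℕ) :
    ((Finset.range m).filter (fun j => j ≤ q ∧ q < j + n)).card
      = min m (q+1) - (q + 1 - n) := by
  have : (Finset.range m).filter (fun j => j ≤ q ∧ q < j + n)
      = Finset.Ico (q+1-n) (min m (q+1)) := by
    ext j
    simp only [Finset.mem_filter, Finset.mem_range, Finset.mem_Ico]
    omega
  rw [this, Nat.card_Ico]

theorem aux_coeff_s14 (d n m k : ℕ) (hd : 0 < d) :
    ((∑ i ∈ Finset.range (d*n), (X:ℤ[X])^i) * (∑ j ∈ Finset.range m, (X^d)^j)).coeff k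
      = ((min m (k/d+1) - (k/d + 1 - n) : ℕ) : ℤ) := by
  rw [← aux_count, Finset.mul_sum, finsetSum_coeff, Finset.card_filter, Nat.cast_sum]
  refine Finset.sum_congr rfl fun j _ => ?_
  rw [← pow_mul, coeff_mul_X_pow', finsetSum_coeff]
  simp only [coeff_X_pow, Finset.sum_ite_eq, Finset.mem_range]
  have e1 : d * j ≤ k ↔ j ≤ k / d := by
    rw [Nat.le_div_iff_mul_le hd, mul_comm]
  have e2 : k < d * j + d * n ↔ k / d < j + n := by
    rw [Nat.div_lt_iff_lt_mul hd, add_mul, mul_comm d, mul_comm d]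
  by_cases h : d * j ≤ k
  · have h' := e1.1 h
    by_cases h3 : k < d * j + d * n
    · rw [if_pos h, if_pos (by omega), if_pos ⟨h', e2.1 h3⟩]; rfl
    · rw [if_pos h, if_neg (by omega), if_neg (fun hh => h3 (e2.2 hh.2))]; rfl
  · rw [if_neg h, if_neg (fun hh => h (e1.2 hh.1))]; rfl

/-- If `d = gcd(T1,T2)` satisfies `d < T2 < T1`, `m = T2/d` and `T = T1+T2-d`, then
the coefficient of `X^k` (for `0 ≤ k ≤ T-1`) in the quotient polynomial
`P_2 = (1-X^T1)(1-X^T2)/((1-X)(1-X^d))` equals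
`min(⌊k/d⌋+1, m, ⌊(T-1-k)/d⌋+1)`, i.e. the coefficient sequence is
`1^d 2^d ⋯ (m-1)^d m^(T1-T2+d) (m-1)^d ⋯ 2^d 1^d`. -/
theorem stmt_14 (T1 T2 : ℕ) (h1 : 0 < T1) (h2 : 0 < T2)
    (d m T : ℕ) (hd : d = Nat.gcd T1 T2) (hdT : d < T2) (hTT : T2 < T1)
    (hm : m = T2 / d) (hT : T = T1 + T2 - d)
    (P : ℤ[X])
    (hP : (1 - X) * (1 - X ^ d) * P = (1 - X ^ T1) * (1 - X ^ T2)) :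
    ∀ k ≤ T - 1,
      P.coeff k = ((min (k / d + 1) (min m ((T - 1 - k) / d + 1)) : ℕ) : ℤ) := by
  intro k hk
  have hd0 : 0 < d := hd ▸ Nat.gcd_pos_of_pos_left _ h1
  obtain ⟨n, hn⟩ : d ∣ T1 := hd ▸ Nat.gcd_dvd_left _ _
  obtain ⟨m', hm'⟩ : d ∣ T2 := hd ▸ Nat.gcd_dvd_right _ _
  have hmm : m = m' := by rw [hm, hm', Nat.mul_div_cancel_left _ hd0]
  subst hmm
  have hne : ∀ e : ℕ, 0 < e → (1 - X ^ e : ℤ[X]) ≠ 0 := by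
    intro e he h
    have := congrArg (fun p => coeff p 0) h
    simp [coeff_X_pow, he.ne] at this
  have hPQ : P = (∑ i ∈ Finset.range (d*n), (X:ℤ[X])^i) * (∑ j ∈ Finset.range m, (X^d)^j) := by
    have hne1 : (1 - X : ℤ[X]) ≠ 0 := by simpa using hne 1 one_pos
    apply mul_left_cancel₀ (mul_ne_zero hne1 (hne d hd0))
    rw [hP, hn, hm', pow_mul X d m, ← mul_neg_geom_sum (X:ℤ[X]) (d*n),
      ← mul_neg_geom_sum ((X:ℤ[X])^d) m]
    ring
  rw [hPQ, aux_coeff_s14 d n m k hd0]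
  congr 1
  have hmn : m < n := by
    rw [hn, hm'] at hTT
    exact Nat.lt_of_mul_lt_mul_left hTT
  have hm1 : 1 < m := by
    by_contra hc
    have : d * m ≤ d * 1 := Nat.mul_le_mul_left _ (by omega)
    omega
  have hTd : T = d * (n + m - 1) := by
    rw [hT, hn, hm', Nat.mul_sub, mul_add, mul_one]
  have hTpos : 0 < T := by omega
  have hkT : k < d * (n + m - 1) := by omega
  have hq : k / d < n + m - 1 := by
    rw [Nat.div_lt_iff_lt_mul hd0, mul_comm]; exact hkT
  have hr : (T - 1 - k) / d = n + m - 1 - (k / d + 1) := by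
    rw [hTd, show d * (n + m - 1) - 1 - k = d * (n+m-1) - (k+1) by omega,
      Nat.mul_sub_div _ _ _ hkT]
  rw [hr]
  clear hr
  generalize k / d = q at *
  clear hkT hTd hTpos hP hPQ hT hk hn hm' hm hd
  simp only [Nat.min_def]
  split_ifs <;> omega
end

section
/- Let T1, T2 be positive integers, d = gcd(T1,T2), T = T1+T2−d, and define h_2 : ℝ → ℝ by h_2(t) = Σ_{j=0}^{T2/d − 1} 𝟙_{[jd, jd+T1)}(t), where 𝟙_{[a,b)} is the characteristic function of the interval [a,b). Then (i) ∫_0^T h_2(t) e^{2πi m t/(T1 T2)} dt = 0 for every nonzero integer m such that T1 divides m or T2 divides m, and (ii) h_2(t) > 0 for every t ∈ (0,T). -/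
open scoped Real

/-- Let `T1, T2` be positive integers, `d = gcd(T1,T2)`, `T = T1+T2-d`, and
`h_2(t) = Σ_{j=0}^{T2/d - 1} 𝟙_{[jd, jd+T1)}(t)`. Then
(i) `∫_0^T h_2(t) e^(2πimt/(T1T2)) dt = 0` for every nonzero integer `m` divisible
by `T1` or by `T2`, and (ii) `h_2 > 0` on `(0,T)`. -/
theorem stmt_15 (T1 T2 : ℕ) (h1 : 0 < T1) (h2 : 0 < T2)
    (d T : ℕ) (hd : d = Nat.gcd T1 T2) (hT : T = T1 + T2 - d)
    (h2f : ℝ → ℝ)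
    (hh2 : ∀ t : ℝ, h2f t = ∑ j ∈ Finset.range (T2 / d),
      Set.indicator (Set.Ico ((j : ℝ) * (d : ℝ)) ((j : ℝ) * (d : ℝ) + (T1 : ℝ)))
        (fun _ => (1 : ℝ)) t) :
    (∀ m : ℤ, m ≠ 0 → ((T1 : ℤ) ∣ m ∨ (T2 : ℤ) ∣ m) →
      ∫ t in (0:ℝ)..(T : ℝ), (h2f t : ℂ) *
        Complex.exp (2 * (π : ℂ) * Complex.I * (m : ℂ) * (t : ℂ) /
          ((T1 : ℂ) * (T2 : ℂ))) = 0) ∧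
    ∀ t ∈ Set.Ioo (0 : ℝ) (T : ℝ), 0 < h2f t := by
  have hdpos : 0 < d := by rw [hd]; exact Nat.gcd_pos_of_pos_left _ h1
  obtain ⟨a, ha⟩ : d ∣ T1 := hd ▸ Nat.gcd_dvd_left T1 T2
  obtain ⟨N, hN⟩ : d ∣ T2 := hd ▸ Nat.gcd_dvd_right T1 T2
  clear hd
  have hdiv : T2 / d = N := by rw [hN]; exact Nat.mul_div_cancel_left _ hdpos
  rw [hdiv] at hh2
  have ha0 : 0 < a := Nat.pos_of_ne_zero (by rintro rfl; simp at ha; omega)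
  have hN0 : 0 < N := Nat.pos_of_ne_zero (by rintro rfl; simp at hN; omega)
  obtain ⟨M, rfl⟩ : ∃ M, N = M + 1 := ⟨N - 1, by omega⟩
  have hT' : T = M * d + T1 := by
    rw [hT, hN, Nat.mul_add, Nat.mul_comm M d]; omega
  have hTR : (T : ℝ) = M * d + T1 := by rw [hT']; push_cast; ring
  have hdR : (0 : ℝ) < d := by exact_mod_cast hdpos
  have hT1R : (0 : ℝ) < T1 := by exact_mod_cast h1
  have hdT1 : (d : ℝ) ≤ T1 := by
    have : d ≤ T1 := by rw [ha]; exact Nat.le_mul_of_pos_right _ ha0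
    exact_mod_cast this
  have hdC : (d : ℂ) ≠ 0 := by exact_mod_cast hdpos.ne'
  have haC : (a : ℂ) ≠ 0 := by exact_mod_cast ha0.ne'
  have hMC : ((M : ℂ) + 1) ≠ 0 := by exact_mod_cast hN0.ne'
  have hT1C : (T1 : ℂ) = d * a := by rw [ha]; push_cast; ring
  have hT2C : (T2 : ℂ) = d * (M + 1) := by rw [hN]; push_cast; ring
  constructor
  · intro m hm hdvd
    obtain ⟨c, hc⟩ : ∃ c : ℂ, c = 2 * (π : ℂ) * Complex.I * (m : ℂ) / ((T1 : ℂ) * (T2 : ℂ)) := ⟨_, rfl⟩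
    have hmC : (m : ℂ) ≠ 0 := by exact_mod_cast hm
    have hc0 : c ≠ 0 := by
      rw [hc, hT1C, hT2C]
      exact div_ne_zero (mul_ne_zero Complex.two_pi_I_ne_zero hmC)
        (mul_ne_zero (mul_ne_zero hdC haC) (mul_ne_zero hdC hMC))
    have hfun : ∀ t : ℝ, (h2f t : ℂ) * Complex.exp (2 * (π : ℂ) * Complex.I * (m : ℂ) * (t : ℂ) /
          ((T1 : ℂ) * (T2 : ℂ))) = ∑ j ∈ Finset.range (M + 1),
        Set.indicator (Set.Ico ((j : ℝ) * (d : ℝ)) ((j : ℝ) * (d : ℝ) + (T1 : ℝ)))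
        (fun t : ℝ => Complex.exp (c * t)) t := by
      intro t
      have he : 2 * (π : ℂ) * Complex.I * (m : ℂ) * (t : ℂ) / ((T1 : ℂ) * (T2 : ℂ)) = c * t := by
        rw [hc]; ring
      rw [he, hh2, Complex.ofReal_sum, Finset.sum_mul]
      refine Finset.sum_congr rfl fun j _ => ?_
      by_cases hj : t ∈ Set.Ico ((j : ℝ) * (d : ℝ)) ((j : ℝ) * (d : ℝ) + (T1 : ℝ))
      · simp [Set.indicator_of_mem hj]
      · simp [Set.indicator_of_notMem hj]
    have hcont : Continuous (fun t : ℝ => Complex.exp (c * t)) := by fun_prop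
    have hTnn : (0 : ℝ) ≤ T := Nat.cast_nonneg _
    simp_rw [hfun]
    rw [intervalIntegral.integral_finset_sum]
    swap
    · intro j _
      rw [intervalIntegrable_iff]
      exact ((hcont.intervalIntegrable 0 (T : ℝ)).def').indicator measurableSet_Ico
    have hterm : ∀ j ∈ Finset.range (M + 1), (∫ t in (0:ℝ)..(T : ℝ),
        Set.indicator (Set.Ico ((j : ℝ) * (d : ℝ)) ((j : ℝ) * (d : ℝ) + (T1 : ℝ)))
        (fun t : ℝ => Complex.exp (c * t)) t) =
        Complex.exp (c * d) ^ j * ((Complex.exp (c * d) ^ a - 1) / c) := by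
      intro j hj
      have hjM : (j : ℝ) ≤ M := by
        have := Finset.mem_range.1 hj
        exact_mod_cast Nat.lt_succ_iff.1 this
      have hjd : (j : ℝ) * d ≤ M * d := mul_le_mul_of_nonneg_right hjM hdR.le
      have hj0 : (0 : ℝ) ≤ j * d := by positivity
      rw [intervalIntegral.integral_of_le hTnn, ← MeasureTheory.integral_Ico_eq_integral_Ioc,
        MeasureTheory.setIntegral_indicator measurableSet_Ico,
        Set.inter_eq_self_of_subset_right (Set.Ico_subset_Ico hj0 (by linarith)),
        MeasureTheory.integral_Ico_eq_integral_Ioc,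
        ← intervalIntegral.integral_of_le (by linarith), integral_exp_mul_complex hc0,
        ← Complex.exp_nat_mul, ← Complex.exp_nat_mul, mul_div_assoc', mul_sub, ← Complex.exp_add]
      push_cast
      rw [hT1C]
      congr 2 <;> ring_nf
    rw [Finset.sum_congr rfl hterm, ← Finset.sum_mul]
    generalize hz : Complex.exp (c * d) = z
    have hgM := geom_sum_mul z (M + 1)
    have hga := geom_sum_mul z a
    have key : (∑ j ∈ Finset.range (M + 1), z ^ j) * (z ^ a - 1) = 0 := by
      rcases hdvd with ⟨k, hk⟩ | ⟨k, hk⟩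
      · have : z ^ (M + 1) = 1 := by
          rw [← hz, ← Complex.exp_nat_mul, Complex.exp_eq_one_iff]
          refine ⟨k, ?_⟩
          rw [hc, hk]; push_cast; rw [hT1C, hT2C]; field_simp
        rw [← hga, mul_left_comm, hgM, this]; simp
      · have : z ^ a = 1 := by
          rw [← hz, ← Complex.exp_nat_mul, Complex.exp_eq_one_iff]
          refine ⟨k, ?_⟩
          rw [hc, hk]; push_cast; rw [hT1C, hT2C]; field_simp
        rw [this]; simp
    rw [mul_div_assoc', key, zero_div]
  · rintro t ⟨ht0, htT⟩
    rw [hh2]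
    obtain ⟨j, hj, hm⟩ : ∃ j ∈ Finset.range (M + 1),
        t ∈ Set.Ico ((j : ℝ) * (d : ℝ)) ((j : ℝ) * (d : ℝ) + (T1 : ℝ)) := by
      by_cases h : (M : ℝ) * d ≤ t
      · exact ⟨M, by simp, h, by linarith⟩
      · have hf1 := Nat.floor_le (div_pos ht0 hdR).le
        have hf2 := Nat.lt_floor_add_one (t / d)
        have hlt : t / d < M := by rw [div_lt_iff₀ hdR]; linarith
        rw [le_div_iff₀ hdR] at hf1
        rw [div_lt_iff₀ hdR] at hf2
        refine ⟨⌊t / d⌋₊, ?_, hf1, by linarith⟩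
        have := (Nat.floor_lt (div_pos ht0 hdR).le).2 hlt
        simp; omega
    refine Finset.sum_pos' (fun i _ => Set.indicator_nonneg (fun _ _ => zero_le_one) _) ⟨j, hj, ?_⟩
    rw [Set.indicator_of_mem hm]; exact one_pos
end

section
/- Let T1, T2, T3 be positive integers with gcd(T1,T2,T3) = 1, set T = T1+T2+T3−d12−d23−d13+1, and define the step function h_3 : ℝ → ℝ by h_3(t) = c_k for t ∈ [k, k+1) (k = 0, 1, …, T−1) and h_3(t) = 0 for t < 0 and t ≥ T, where c_k is the coefficient of X^k in P_3. Then ∫_0^T h_3(t) e^{2πi m t/(T1 T2 T3)} dt = 0 for every nonzero integer m such that at least one of T1T2, T2T3, T1T3 divides m. -/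
open Polynomial
open scoped Real

lemma aux_root (a b c : ℕ) (ha : 0 < a) (hb : 0 < b)
    (hg : Nat.gcd (Nat.gcd a b) c = 1) (P : ℤ[X])
    (hP : (1 - X ^ Nat.gcd a b) * (1 - X ^ Nat.gcd b c) * (1 - X ^ Nat.gcd a c) * P =
      (1 - X ^ a) * (1 - X ^ b) * (1 - X ^ c)) (z : ℂ) (hz : z ^ c = 1) (hz1 : z ≠ 1) :
    aeval z P = 0 := by
  have key : ∀ p q : ℕ, Nat.gcd p q = 1 → z ^ p = 1 → z ^ q = 1 → False := by
    intro p q h hp hq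
    have h1 : orderOf z ∣ Nat.gcd p q :=
      Nat.dvd_gcd (orderOf_dvd_of_pow_eq_one hp) (orderOf_dvd_of_pow_eq_one hq)
    rw [h, Nat.dvd_one, orderOf_eq_one_iff] at h1
    exact hz1 h1
  have n1 : 1 - z ^ Nat.gcd a b ≠ 0 := fun h => key _ _ hg (sub_eq_zero.1 h).symm hz
  have hne : ∀ d : ℕ, 0 < d → (1 - X ^ d : ℤ[X]) ≠ 0 := by
    intro d hd h
    have := congrArg (fun p => Polynomial.eval 0 p) h
    simp [hd.ne'] at this
  have hdvd : ∀ d e : ℕ, d ∣ e → ∃ A : ℤ[X], (1 - X ^ e : ℤ[X]) = (1 - X ^ d) * A := by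
    rintro d _ ⟨k, rfl⟩
    have : (1 - X ^ d : ℤ[X]) ∣ 1 - X ^ (d * k) := by
      rw [pow_mul]; exact one_sub_dvd_one_sub_pow _ _
    exact this
  have hab : Nat.gcd (Nat.gcd b c) (Nat.gcd a c) = 1 := by
    rw [← hg]
    apply Nat.dvd_antisymm
    · refine Nat.dvd_gcd (Nat.dvd_gcd ?_ ?_) ?_
      · exact (Nat.gcd_dvd_right _ _).trans (Nat.gcd_dvd_left _ _)
      · exact (Nat.gcd_dvd_left _ _).trans (Nat.gcd_dvd_left _ _)
      · exact (Nat.gcd_dvd_left _ _).trans (Nat.gcd_dvd_right _ _)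
    · rw [hg]; exact one_dvd _
  by_cases hA : z ^ Nat.gcd a c = 1
  · have n2 : 1 - z ^ Nat.gcd b c ≠ 0 := fun h => key _ _ hab (sub_eq_zero.1 h).symm hA
    obtain ⟨A, hA'⟩ := hdvd _ _ (Nat.gcd_dvd_left a c)
    have : (1 - X ^ Nat.gcd a b) * (1 - X ^ Nat.gcd b c) * P = A * (1 - X ^ b) * (1 - X ^ c) := by
      apply mul_left_cancel₀ (hne _ (Nat.gcd_pos_of_pos_left c ha))
      linear_combination hP + (1 - X ^ b) * (1 - X ^ c) * hA'
    have h := congrArg (aeval z) this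
    simp [hz] at h
    rcases h with (h | h) | h
    · exact absurd h n1
    · exact absurd h n2
    · exact h
  have n3 : 1 - z ^ Nat.gcd a c ≠ 0 := fun h => hA (sub_eq_zero.1 h).symm
  by_cases hB : z ^ Nat.gcd b c = 1
  · obtain ⟨A, hA'⟩ := hdvd _ _ (Nat.gcd_dvd_left b c)
    have : (1 - X ^ Nat.gcd a b) * (1 - X ^ Nat.gcd a c) * P = A * (1 - X ^ a) * (1 - X ^ c) := by
      apply mul_left_cancel₀ (hne _ (Nat.gcd_pos_of_pos_left c hb))
      linear_combination hP + (1 - X ^ a) * (1 - X ^ c) * hA'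
    have h := congrArg (aeval z) this
    simp [hz] at h
    rcases h with (h | h) | h
    · exact absurd h n1
    · exact absurd h n3
    · exact h
  have n2 : 1 - z ^ Nat.gcd b c ≠ 0 := fun h => hB (sub_eq_zero.1 h).symm
  have h := congrArg (aeval z) hP
  simp [hz] at h
  rcases h with ((h | h) | h) | h
  · exact absurd h n1
  · exact absurd h n2
  · exact absurd h n3
  · exact h

lemma aux_natDegree (d : ℕ) (hd : 0 < d) :
    (1 - X ^ d : ℤ[X]).natDegree = d ∧ (1 - X ^ d : ℤ[X]) ≠ 0 := by
  have h : (1 - X ^ d : ℤ[X]) = -(X ^ d - C 1) := by simp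
  rw [h, natDegree_neg, natDegree_X_pow_sub_C]
  exact ⟨rfl, neg_ne_zero.2 (X_pow_sub_C_ne_zero hd 1)⟩

lemma aux_pow (c : ℕ) (hc : 0 < c) (ω : ℂ) (j : ℤ) (h : ω = 2 * π * Complex.I * j / c) :
    Complex.exp ω ^ c = 1 := by
  rw [← Complex.exp_nat_mul, Complex.exp_eq_one_iff]
  refine ⟨j, ?_⟩
  have : (c : ℂ) ≠ 0 := by exact_mod_cast hc.ne'
  rw [h]; field_simp

lemma aux_int (P : ℤ[X]) (T : ℕ) (hT : P.natDegree < T) (h3f : ℝ → ℝ)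
    (hh3 : ∀ t : ℝ, h3f t = ∑ k ∈ Finset.range T,
      (P.coeff k : ℝ) *
        Set.indicator (Set.Ico ((k : ℝ)) ((k : ℝ) + 1)) (fun _ => (1 : ℝ)) t)
    (ω : ℂ) (hω : ω ≠ 0) :
    ∫ t in (0:ℝ)..(T : ℝ), (h3f t : ℂ) * Complex.exp (ω * t) =
      aeval (Complex.exp ω) P * ((Complex.exp ω - 1) / ω) := by
  have hval : ∀ k < T, ∀ t ∈ Set.Ioo (k : ℝ) ((k + 1 : ℕ) : ℝ), h3f t = P.coeff k := by
    intro k hk t ht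
    push_cast at ht
    rw [hh3, Finset.sum_eq_single k]
    · rw [Set.indicator_of_mem (Set.mem_Ico.2 ⟨ht.1.le, ht.2⟩), mul_one]
    · intro i _ hik
      rw [Set.indicator_of_notMem, mul_zero]
      rintro ⟨h1, h2⟩
      apply hik
      have a1 : (i : ℝ) < ((k + 1 : ℕ) : ℝ) := by push_cast; linarith [ht.2]
      have a2 : (k : ℝ) < ((i + 1 : ℕ) : ℝ) := by push_cast; linarith [ht.1]
      have := Nat.cast_lt.1 a1
      have := Nat.cast_lt.1 a2
      omega
    · intro h; simp [hk] at h
  have hae : ∀ k < T, ∀ᵐ t ∂(MeasureTheory.volume : MeasureTheory.Measure ℝ),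
      t ∈ Set.uIoc (k : ℝ) ((k + 1 : ℕ) : ℝ) →
      (P.coeff k : ℂ) * Complex.exp (ω * t) = (h3f t : ℂ) * Complex.exp (ω * t) := by
    intro k hk
    filter_upwards [MeasureTheory.Measure.ae_ne MeasureTheory.volume ((k + 1 : ℕ) : ℝ)] with t ht hm
    rw [Set.uIoc_of_le (by push_cast; linarith)] at hm
    rw [hval k hk t ⟨hm.1, lt_of_le_of_ne hm.2 ht⟩]
    simp
  have hint : ∀ k < T, IntervalIntegrable (fun t : ℝ => (h3f t : ℂ) * Complex.exp (ω * t))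
      MeasureTheory.volume (k : ℝ) ((k + 1 : ℕ) : ℝ) := by
    intro k hk
    have : IntervalIntegrable (fun t : ℝ => (P.coeff k : ℂ) * Complex.exp (ω * t))
      MeasureTheory.volume (k : ℝ) ((k + 1 : ℕ) : ℝ) :=
      Continuous.intervalIntegrable (by fun_prop) _ _
    refine this.congr_ae ?_
    exact (MeasureTheory.ae_restrict_iff' measurableSet_uIoc).2 (hae k hk)
  have hs := intervalIntegral.sum_integral_adjacent_intervals (a := fun k : ℕ => (k : ℝ)) hint
  simp only [Nat.cast_zero] at hs
  rw [← hs, aeval_eq_sum_range' hT, Finset.sum_mul]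
  refine Finset.sum_congr rfl fun k hk => ?_
  rw [← intervalIntegral.integral_congr_ae (hae k (Finset.mem_range.1 hk)),
    intervalIntegral.integral_const_mul, integral_exp_mul_complex hω]
  have e1 : Complex.exp (ω * ((k : ℝ) : ℂ)) = Complex.exp ω ^ k := by
    rw [← Complex.exp_nat_mul]; congr 1; push_cast; ring
  have e2 : Complex.exp (ω * (((k + 1 : ℕ) : ℝ) : ℂ)) = Complex.exp ω ^ (k + 1) := by
    rw [← Complex.exp_nat_mul]; congr 1; push_cast; ring
  rw [e1, e2, zsmul_eq_mul]
  ring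

/-- Let `T1, T2, T3` be positive integers with `gcd(T1,T2,T3) = 1`, let `P` be the
quotient polynomial `P_3 = (1-X^T1)(1-X^T2)(1-X^T3)/((1-X^d12)(1-X^d23)(1-X^d13))`,
`T = T1+T2+T3-d12-d23-d13+1`, and let `h_3` be the step function equal to the
coefficient `c_k` of `P_3` on `[k, k+1)` for `0 ≤ k < T` and `0` elsewhere. Then
`∫_0^T h_3(t) e^(2πimt/(T1T2T3)) dt = 0` for every nonzero integer `m` divisible by
at least one of `T1T2`, `T2T3`, `T1T3`. -/
theorem stmt_16 (T1 T2 T3 : ℕ) (h1 : 0 < T1) (h2 : 0 < T2) (h3 : 0 < T3)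
    (hgcd : Nat.gcd (Nat.gcd T1 T2) T3 = 1)
    (d12 d23 d13 : ℕ) (hd12 : d12 = Nat.gcd T1 T2) (hd23 : d23 = Nat.gcd T2 T3)
    (hd13 : d13 = Nat.gcd T1 T3)
    (P : ℤ[X])
    (hP : (1 - X ^ d12) * (1 - X ^ d23) * (1 - X ^ d13) * P =
      (1 - X ^ T1) * (1 - X ^ T2) * (1 - X ^ T3))
    (T : ℕ) (hT : T = T1 + T2 + T3 - d12 - d23 - d13 + 1)
    (h3f : ℝ → ℝ)
    (hh3 : ∀ t : ℝ, h3f t = ∑ k ∈ Finset.range T,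
      (P.coeff k : ℝ) *
        Set.indicator (Set.Ico ((k : ℝ)) ((k : ℝ) + 1)) (fun _ => (1 : ℝ)) t) :
    ∀ m : ℤ, m ≠ 0 →
      (((T1 * T2 : ℕ) : ℤ) ∣ m ∨ ((T2 * T3 : ℕ) : ℤ) ∣ m ∨ ((T1 * T3 : ℕ) : ℤ) ∣ m) →
      ∫ t in (0:ℝ)..(T : ℝ), (h3f t : ℂ) *
        Complex.exp (2 * (π : ℂ) * Complex.I * (m : ℂ) * (t : ℂ) /
          ((T1 : ℂ) * (T2 : ℂ) * (T3 : ℂ))) = 0 := by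
  intro m hm hdiv
  subst hd12 hd23 hd13
  have g12 := Nat.gcd_pos_of_pos_left T2 h1
  have g23 := Nat.gcd_pos_of_pos_left T3 h2
  have g13 := Nat.gcd_pos_of_pos_left T3 h1
  have hdeg : P.natDegree < T := by
    have hP0 : P ≠ 0 := by
      rintro rfl
      rw [mul_zero] at hP
      exact mul_ne_zero (mul_ne_zero (aux_natDegree _ h1).2 (aux_natDegree _ h2).2)
        (aux_natDegree _ h3).2 hP.symm
    have h := congrArg natDegree hP
    rw [natDegree_mul (mul_ne_zero (mul_ne_zero (aux_natDegree _ g12).2 (aux_natDegree _ g23).2)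
        (aux_natDegree _ g13).2) hP0,
      natDegree_mul (mul_ne_zero (aux_natDegree _ g12).2 (aux_natDegree _ g23).2)
        (aux_natDegree _ g13).2,
      natDegree_mul (aux_natDegree _ g12).2 (aux_natDegree _ g23).2,
      natDegree_mul (mul_ne_zero (aux_natDegree _ h1).2 (aux_natDegree _ h2).2)
        (aux_natDegree _ h3).2,
      natDegree_mul (aux_natDegree _ h1).2 (aux_natDegree _ h2).2,
      (aux_natDegree _ h1).1, (aux_natDegree _ h2).1, (aux_natDegree _ h3).1,
      (aux_natDegree _ g12).1, (aux_natDegree _ g23).1, (aux_natDegree _ g13).1] at h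
    omega
  have c1 : (T1 : ℂ) ≠ 0 := by exact_mod_cast h1.ne'
  have c2 : (T2 : ℂ) ≠ 0 := by exact_mod_cast h2.ne'
  have c3 : (T3 : ℂ) ≠ 0 := by exact_mod_cast h3.ne'
  have cm : (m : ℂ) ≠ 0 := by exact_mod_cast hm
  obtain ⟨ω, hω⟩ : ∃ ω : ℂ, ω = 2 * π * Complex.I * m / (T1 * T2 * T3) := ⟨_, rfl⟩
  have hω0 : ω ≠ 0 := by
    rw [hω]
    exact div_ne_zero (mul_ne_zero Complex.two_pi_I_ne_zero cm)
      (mul_ne_zero (mul_ne_zero c1 c2) c3)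
  have hI := aux_int P T hdeg h3f hh3 ω hω0
  have hfun : ∀ t : ℝ, 2 * (π : ℂ) * Complex.I * (m : ℂ) * (t : ℂ) /
          ((T1 : ℂ) * (T2 : ℂ) * (T3 : ℂ)) = ω * t := by
    intro t; rw [hω]; ring
  simp only [hfun]
  rw [hI]
  by_cases hz1 : Complex.exp ω = 1
  · rw [hz1]; simp
  suffices aeval (Complex.exp ω) P = 0 by rw [this, zero_mul]
  rcases hdiv with ⟨j, rfl⟩ | ⟨j, rfl⟩ | ⟨j, rfl⟩
  · refine aux_root T1 T2 T3 h1 h2 hgcd P hP _ (aux_pow T3 h3 ω j ?_) hz1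
    rw [hω]; push_cast; field_simp
  · refine aux_root T2 T3 T1 h2 h3 ?_ P ?_ _ (aux_pow T1 h1 ω j ?_) hz1
    · rw [Nat.gcd_comm, ← Nat.gcd_assoc]; exact hgcd
    · rw [Nat.gcd_comm T3 T1, Nat.gcd_comm T2 T1]; linear_combination hP
    · rw [hω]; push_cast; field_simp
  · refine aux_root T1 T3 T2 h1 h3 ?_ P ?_ _ (aux_pow T2 h2 ω j ?_) hz1
    · rw [Nat.gcd_assoc, Nat.gcd_comm T3 T2, ← Nat.gcd_assoc]; exact hgcd
    · rw [Nat.gcd_comm T3 T2]; linear_combination hP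
    · rw [hω]; push_cast; field_simp
end

section
/- Let T1, T2, T3, T4 be positive integers with gcd(T1,T2,T3,T4) = 1. Suppose there exist two distinct 3-element subsets S1 ≠ S2 of the index set {1,2,3,4} and two distinct 2-element subsets S3 ≠ S4 of {1,2,3,4} such that gcd{T_i : i ∈ S1} = gcd{T_i : i ∈ S3} and gcd{T_i : i ∈ S2} = gcd{T_i : i ∈ S4}. Then the rational function P_4(X) = [∏_{i=1}^{4}(1−X^{T_i})] · [∏_{3-element subsets S of {1,2,3,4}} (1−X^{gcd{T_i : i ∈ S}})] / ([∏_{2-element subsets S of {1,2,3,4}} (1−X^{gcd{T_i : i ∈ S}})] · (1−X)^2) is a polynomial with nonnegative coefficients. -/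
open Polynomial

/-- divisibility with nonnegative quotient -/
def NDvd (a b : ℤ[X]) : Prop := ∃ P : ℤ[X], a * P = b ∧ ∀ k, 0 ≤ P.coeff k

theorem NDvd.mul {a b c d : ℤ[X]} (h : NDvd a b) (h' : NDvd c d) : NDvd (a * c) (b * d) := by
  obtain ⟨P, rfl, hP⟩ := h
  obtain ⟨Q, rfl, hQ⟩ := h'
  refine ⟨P * Q, by ring, fun k => ?_⟩
  rw [coeff_mul]
  exact Finset.sum_nonneg fun x _ => mul_nonneg (hP _) (hQ _)

theorem NDvd.prod {ι : Type*} (s : Finset ι) (a b : ι → ℤ[X]) (h : ∀ i ∈ s, NDvd (a i) (b i)) :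
    NDvd (∏ i ∈ s, a i) (∏ i ∈ s, b i) := by
  classical
  induction s using Finset.induction_on with
  | empty =>
    refine ⟨1, by simp, fun k => ?_⟩
    rw [coeff_one]; split_ifs <;> simp
  | insert i s hi ih =>
    rw [Finset.prod_insert hi, Finset.prod_insert hi]
    exact (h i (by simp)).mul (ih fun j hj => h j (by simp [hj]))

theorem NDvd.of_dvd {m n : ℕ} (h : m ∣ n) : NDvd (1 - X ^ m) (1 - X ^ n) := by
  obtain ⟨k, rfl⟩ := h
  refine ⟨∑ i ∈ Finset.range k, (X ^ m) ^ i, ?_, fun j => ?_⟩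
  · rw [mul_neg_geom_sum, pow_mul]
  · rw [finset_sum_coeff]
    refine Finset.sum_nonneg fun i _ => ?_
    rw [← pow_mul, coeff_X_pow]
    split_ifs <;> simp

theorem comb_aux : ∀ S3 S4 : Finset (Fin 4), S3.card = 2 → S4.card = 2 → S3 ≠ S4 →
    ∃ a b c d : Fin 4,
      Finset.univ.image (fun i : Fin 4 => ({i, ![a, b, c, d] i} : Finset (Fin 4))) =
      ((Finset.univ.filter (fun S : Finset (Fin 4) => S.card = 2)).erase S3).erase S4 := by
  decide +kernel


open Polynomial

/-- Let `T : Fin 4 → ℕ` be positive integers with `gcd = 1`. If there are two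
distinct 3-element index subsets `S1 ≠ S2` and two distinct 2-element index subsets
`S3 ≠ S4` with `gcd(S1) = gcd(S3)` and `gcd(S2) = gcd(S4)`, then the rational
function `P_4 = [∏ᵢ(1-X^(T i))] ⬝ [∏_{|S|=3}(1-X^(gcd S))] /
([∏_{|S|=2}(1-X^(gcd S))] ⬝ (1-X)²)` is a polynomial with nonnegative
coefficients. -/
theorem stmt_17 (T : Fin 4 → ℕ) (hpos : ∀ i, 0 < T i)
    (hgcd : Finset.univ.gcd T = 1)
    (S1 S2 : Finset (Fin 4)) (hS1 : S1.card = 3) (hS2 : S2.card = 3)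
    (hS12 : S1 ≠ S2)
    (S3 S4 : Finset (Fin 4)) (hS3 : S3.card = 2) (hS4 : S4.card = 2)
    (hS34 : S3 ≠ S4)
    (h13 : S1.gcd T = S3.gcd T) (h24 : S2.gcd T = S4.gcd T) :
    ∃ P : ℤ[X],
      ((∏ S ∈ Finset.univ.filter (fun S : Finset (Fin 4) => S.card = 2),
          (1 - X ^ (S.gcd T))) * (1 - X) ^ 2) * P =
        (∏ i, (1 - X ^ (T i))) *
          ∏ S ∈ Finset.univ.filter (fun S : Finset (Fin 4) => S.card = 3),
            (1 - X ^ (S.gcd T)) ∧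
      ∀ k, 0 ≤ P.coeff k := by
  classical
  set A := Finset.univ.filter (fun S : Finset (Fin 4) => S.card = 2) with hA
  set B := Finset.univ.filter (fun S : Finset (Fin 4) => S.card = 3) with hB
  have h3 : S3 ∈ A := by simp [hA, hS3]
  have h4 : S4 ∈ A.erase S3 := by simp [hA, hS4, hS34.symm]
  have h1 : S1 ∈ B := by simp [hB, hS1]
  have h2 : S2 ∈ B.erase S1 := by simp [hB, hS2, hS12.symm]
  have cA : ((A.erase S3).erase S4).card = 4 := by
    rw [Finset.card_erase_of_mem h4, Finset.card_erase_of_mem h3, hA]; decide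
  have cB : ((B.erase S1).erase S2).card = 2 := by
    rw [Finset.card_erase_of_mem h2, Finset.card_erase_of_mem h1, hB]; decide
  rw [← Finset.mul_prod_erase A _ h3, ← Finset.mul_prod_erase _ _ h4,
    ← Finset.mul_prod_erase B _ h1, ← Finset.mul_prod_erase _ _ h2]
  obtain ⟨a, b, c, d, he⟩ := comb_aux S3 S4 hS3 hS4 hS34
  rw [← hA] at he
  have hinj : Set.InjOn (fun i : Fin 4 => ({i, ![a, b, c, d] i} : Finset (Fin 4)))
      (Finset.univ : Finset (Fin 4)) := by
    apply Finset.injOn_of_card_image_eq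
    rw [he, cA]; rfl
  have key1 : NDvd (∏ S ∈ (A.erase S3).erase S4, (1 - X ^ (S.gcd T))) (∏ i, (1 - X ^ (T i))) := by
    rw [← he, Finset.prod_image hinj]
    exact NDvd.prod _ _ _ fun i _ => NDvd.of_dvd (Finset.gcd_dvd (by simp))
  have key2 : NDvd ((1 - X) ^ 2) (∏ S ∈ (B.erase S1).erase S2, (1 - X ^ (S.gcd T))) := by
    rw [← cB, ← Finset.prod_const]
    refine NDvd.prod _ _ _ fun i _ => ?_
    have := NDvd.of_dvd (one_dvd (i.gcd T))
    rwa [pow_one] at this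
  obtain ⟨P, hP, hP0⟩ := key1.mul key2
  refine ⟨P, ?_, hP0⟩
  rw [h13, h24]
  linear_combination (1 - X ^ (S3.gcd T)) * (1 - X ^ (S4.gcd T)) * hP
end

section
/- Let a, b, c, d be pairwise coprime integers with 1 < a < b < c < d. Then the rational function P_4(X) = (1−X^a)(1−X^b)(1−X^c)(1−X^d)(1−X^{abc})(1−X^{abd})(1−X^{acd})(1−X^{bcd}) / ((1−X)^2 (1−X^{ab})(1−X^{ac})(1−X^{ad})(1−X^{bc})(1−X^{bd})(1−X^{cd})) is a polynomial which has at least one strictly positive coefficient and at least one strictly negative coefficient. -/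
open Polynomial

def gg {R : Type*} [CommRing R] (x : R) (n : ℕ) : R := ∑ i ∈ Finset.range n, x ^ i

lemma gg_zero {R : Type*} [CommRing R] (x : R) : gg x 0 = 0 := by simp [gg]

lemma gg_one {R : Type*} [CommRing R] (x : R) : gg x 1 = 1 := by simp [gg]

lemma gg_add {R : Type*} [CommRing R] (x : R) (m n : ℕ) :
    gg x (m + n) = gg x m + x ^ m * gg x n := by
  simp only [gg, Finset.sum_range_add, Finset.mul_sum, pow_add]

lemma gg_mul {R : Type*} [CommRing R] (x : R) (m n : ℕ) :
    gg x (m * n) = gg x m * gg (x ^ m) n := by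
  induction n with
  | zero => simp [gg]
  | succ n ih =>
    rw [Nat.mul_succ, gg_add, ih, gg_add (x ^ m) n 1, gg_one, ← pow_mul]; ring

lemma gg_one_sub {R : Type*} [CommRing R] (x : R) (n : ℕ) :
    1 - x ^ n = (1 - x) * gg x n := by
  unfold gg; rw [mul_neg_geom_sum]

lemma gg_cop_x {R : Type*} [CommRing R] (x : R) (m : ℕ) (hm : 0 < m) :
    IsCoprime (gg x m) x := by
  obtain ⟨k, rfl⟩ : ∃ k, m = 1 + k := ⟨m - 1, by omega⟩
  rw [gg_add, gg_one, pow_one]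
  exact ⟨1, -gg x k, by ring⟩

lemma gg_cop {R : Type*} [CommRing R] (x : R) : ∀ (s m n : ℕ), m + n ≤ s → Nat.gcd m n = 1 →
    IsCoprime (gg x m) (gg x n) := by
  have key : ∀ m n, 0 < m → IsCoprime (gg x m) (gg x n) → IsCoprime (gg x m) (gg x (m + n)) := by
    intro m n hm h
    have h1 : IsCoprime (gg x m) (x ^ m * gg x n) := ((gg_cop_x x m hm).pow_right).mul_right h
    rw [gg_add]
    simpa [add_comm] using h1.add_mul_left_right 1
  intro s
  induction s with
  | zero =>
    intro m n h hg
    obtain ⟨rfl, rfl⟩ : m = 0 ∧ n = 0 := by omega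
    simp at hg
  | succ s ih =>
    intro m n h hg
    rcases Nat.eq_zero_or_pos m with rfl | hm
    · simp at hg; subst hg; rw [gg_one]; exact isCoprime_one_right
    rcases Nat.eq_zero_or_pos n with rfl | hn
    · simp at hg; subst hg; rw [gg_one]; exact isCoprime_one_left
    rcases le_total m n with hmn | hmn
    · obtain ⟨k, rfl⟩ := Nat.exists_eq_add_of_le hmn
      exact key m k hm (ih m k (by omega) (by simpa using hg))
    · obtain ⟨k, rfl⟩ := Nat.exists_eq_add_of_le hmn
      exact (key n k hn (ih n k (by omega) (by rw [Nat.gcd_comm]; simpa using hg))).symm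

lemma gg_two {R : Type*} [CommRing R] (x : R) (a b : ℕ) (h : Nat.gcd a b = 1) :
    ∃ y, gg x (a * b) = gg x a * gg x b * y := by
  have : gg x a * gg x b ∣ gg x (a * b) := by
    apply (gg_cop x _ a b le_rfl h).mul_dvd
    · rw [gg_mul]; exact dvd_mul_right _ _
    · rw [mul_comm, gg_mul]; exact dvd_mul_right _ _
  exact this

lemma gg_ne (n : ℕ) (hn : 0 < n) : gg (X : ℤ[X]) n ≠ 0 := by
  intro h
  have := congrArg (eval 1) h
  simp [gg, eval_finsetSum] at this
  omega

lemma gg_three (a b c : ℕ) (ha : 0 < a) (hb : 0 < b) (hc : 0 < c)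
    (hab : Nat.gcd a b = 1) (hac : Nat.gcd a c = 1)
    (hbc : Nat.gcd b c = 1) (x y z : ℤ[X])
    (hx : gg X (a * b) = gg X a * gg X b * x) (hy : gg X (a * c) = gg X a * gg X c * y)
    (hz : gg X (b * c) = gg X b * gg X c * z) :
    ∃ w, gg X (a * b * c) = gg X a * gg X b * gg X c * x * y * z * w := by
  have cop : ∀ (a b c : ℕ) (x y : ℤ[X]), 0 < a → Nat.gcd b c = 1 →
      gg X (a * b) = gg X a * x → gg X (a * c) = gg X a * y → IsCoprime x y := by
    intro a b c x y ha h hx hy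
    rw [gg_mul] at hx hy
    rw [← mul_left_cancel₀ (gg_ne a ha) hx, ← mul_left_cancel₀ (gg_ne a ha) hy]
    exact gg_cop _ _ _ _ le_rfl h
  have h1 : IsCoprime (gg X b * x) (gg X c * y) :=
    cop a b c _ _ ha hbc (by rw [hx]; ring) (by rw [hy]; ring)
  have h2 : IsCoprime (gg X a * x) (gg X c * z) :=
    cop b a c _ _ hb hac (by rw [mul_comm b a, hx]; ring) (by rw [hz]; ring)
  have h3 : IsCoprime (gg X a * y) (gg X b * z) :=
    cop c a b _ _ hc hab (by rw [mul_comm c a, hy]; ring) (by rw [mul_comm c b, hz]; ring)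
  have e1 : gg (X : ℤ[X]) (a * b * c) = gg X a * gg (X ^ a) (b * c) := by
    rw [mul_assoc, gg_mul]
  have d1 : gg X b * x ∣ gg ((X : ℤ[X]) ^ a) (b * c) := by
    apply (mul_dvd_mul_iff_left (gg_ne a ha)).1
    rw [← e1, gg_mul X (a * b) c, hx, ← mul_assoc]
    exact dvd_mul_right _ _
  have d2 : gg X c * y ∣ gg ((X : ℤ[X]) ^ a) (b * c) := by
    apply (mul_dvd_mul_iff_left (gg_ne a ha)).1
    rw [← e1, mul_right_comm a b c, gg_mul X (a * c) b, hy, ← mul_assoc]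
    exact dvd_mul_right _ _
  obtain ⟨w, hw⟩ := h1.mul_dvd d1 d2
  have d3 : z ∣ gg X a * x * y * w := by
    apply (mul_dvd_mul_iff_left (mul_ne_zero (gg_ne b hb) (gg_ne c hc))).1
    have : gg X b * gg X c * (gg X a * x * y * w) = gg X (a * b * c) := by
      rw [e1, hw]; ring
    rw [this, ← hz, show a * b * c = b * c * a by ring, gg_mul X (b * c) a]
    exact dvd_mul_right _ _
  have c1 : IsCoprime z (gg X a * x) := h2.symm.of_mul_left_right
  have c2 : IsCoprime z y := h3.symm.of_mul_left_right.of_mul_right_right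
  obtain ⟨v, hv⟩ := (c1.mul_right c2).dvd_of_dvd_mul_left d3
  exact ⟨v, by rw [e1, hw, hv]; ring⟩

lemma gg_coeff (n k : ℕ) : (gg (X : ℤ[X]) n).coeff k = if k < n then 1 else 0 := by
  simp [gg, coeff_X_pow]

lemma g_nonneg (a b k : ℕ) : 0 ≤ (gg (X : ℤ[X]) a * gg X b).coeff k := by
  rw [coeff_mul]
  apply Finset.sum_nonneg
  intro p _
  simp only [gg_coeff]
  split_ifs <;> simp

lemma g_pos (a b k : ℕ) (ha : 0 < a) (hb : 0 < b) (h : k + 2 ≤ a + b) :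
    0 < (gg (X : ℤ[X]) a * gg X b).coeff k := by
  rw [coeff_mul]
  apply Finset.sum_pos'
  · intro p _
    simp only [gg_coeff]
    split_ifs <;> simp
  · refine ⟨(min k (a - 1), k - min k (a - 1)), ?_, ?_⟩
    · rw [Finset.HasAntidiagonal.mem_antidiagonal]; simp only; omega
    · simp only [gg_coeff]
      rw [if_pos (by omega), if_pos (by omega)]; simp

lemma g_zero (a b k : ℕ) (h : a + b < k + 2) :
    (gg (X : ℤ[X]) a * gg X b).coeff k = 0 := by
  rw [coeff_mul]
  apply Finset.sum_eq_zero
  intro p hp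
  rw [Finset.HasAntidiagonal.mem_antidiagonal] at hp
  simp only [gg_coeff]
  split_ifs <;> first | rfl | (exfalso; omega)

lemma B_coeff (g : ℤ[X]) (c d k : ℕ) (h : k < c + d) :
    (g * (1 - X ^ c) * (1 - X ^ d)).coeff k =
      g.coeff k - (if c ≤ k then g.coeff (k - c) else 0)
        - (if d ≤ k then g.coeff (k - d) else 0) := by
  have : g * (1 - X ^ c) * (1 - X ^ d) = g - g * X ^ c - g * X ^ d + g * X ^ (c + d) := by
    rw [pow_add]; ring
  rw [this, coeff_add, coeff_sub, coeff_sub, coeff_mul_X_pow', coeff_mul_X_pow',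
    coeff_mul_X_pow', if_neg (show ¬ c + d ≤ k by omega), add_zero]

lemma trunc_eq (M : ℕ) (P Q : ℤ[X])
    (h : Ideal.Quotient.mk (Ideal.span {(X : ℤ[X]) ^ M}) P = Ideal.Quotient.mk _ Q)
    (k : ℕ) (hk : k < M) : P.coeff k = Q.coeff k := by
  rw [Ideal.Quotient.eq, Ideal.mem_span_singleton, X_pow_dvd_iff] at h
  have := h k hk
  rw [coeff_sub] at this
  omega

lemma trunc_pow (M n : ℕ) (h : M ≤ n) :
    (Ideal.Quotient.mk (Ideal.span {(X : ℤ[X]) ^ M}) X) ^ n = 0 := by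
  rw [← map_pow, Ideal.Quotient.eq_zero_iff_mem, Ideal.mem_span_singleton]
  exact pow_dvd_pow _ h

lemma neg_case1 (a b c d : ℕ) (ha : 1 < a) (hab : a < b) (hbc : b < c) (hcd : c < d)
    (hc : c < a * b) (P : ℤ[X])
    (h : (1 - X ^ (a * b)) * (1 - X ^ (a * c)) * (1 - X ^ (a * d)) *
        (1 - X ^ (b * c)) * (1 - X ^ (b * d)) * (1 - X ^ (c * d)) * P =
        gg X a * gg X b * (1 - X ^ c) * (1 - X ^ d) *
          (1 - X ^ (a * b * c)) * (1 - X ^ (a * b * d)) * (1 - X ^ (a * c * d)) *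
          (1 - X ^ (b * c * d))) : ∃ k, P.coeff k < 0 := by
  have hab2 : a + b - 1 < a * b := by
    have : a + b ≤ a * b := by nlinarith
    omega
  have hP : ∀ k < a * b, P.coeff k = ((gg X a * gg X b : ℤ[X]) * (1 - X ^ c) * (1 - X ^ d)).coeff k := by
    apply trunc_eq
    have h' := congrArg (Ideal.Quotient.mk (Ideal.span {(X : ℤ[X]) ^ (a * b)})) h
    simp only [map_mul, map_sub, map_pow, map_one] at h' ⊢
    rw [trunc_pow _ (a * b) le_rfl, trunc_pow _ (a * c) (by nlinarith),
      trunc_pow _ (a * d) (by nlinarith), trunc_pow _ (b * c) (by nlinarith),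
      trunc_pow _ (b * d) (by nlinarith), trunc_pow _ (c * d) (by nlinarith),
      trunc_pow _ (a * b * c) (Nat.le_mul_of_pos_right _ (by omega)),
      trunc_pow _ (a * b * d) (Nat.le_mul_of_pos_right _ (by omega)),
      trunc_pow _ (a * c * d) ((show a * b ≤ a * c by nlinarith).trans
        (Nat.le_mul_of_pos_right _ (by omega))),
      trunc_pow _ (b * c * d) ((show a * b ≤ b * c by nlinarith).trans
        (Nat.le_mul_of_pos_right _ (by omega)))] at h'
    simpa using h'
  refine ⟨max c (a + b - 1), ?_⟩
  rw [hP _ (by omega), B_coeff _ _ _ _ (by omega), g_zero a b _ (by omega), if_pos (by omega)]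
  have h1 := g_pos a b (max c (a + b - 1) - c) (by omega) (by omega) (by omega)
  split_ifs
  · have := g_nonneg a b (max c (a + b - 1) - d)
    omega
  · omega

lemma neg_case2 (a b c d : ℕ) (ha : 1 < a) (hab : a < b) (hbc : b < c) (hcd : c < d)
    (hac' : Nat.gcd a c = 1) (hbc' : Nat.gcd b c = 1)
    (hc : a * b ≤ c) (P : ℤ[X])
    (h : (1 - X ^ (a * b)) * (1 - X ^ (a * c)) * (1 - X ^ (a * d)) *
        (1 - X ^ (b * c)) * (1 - X ^ (b * d)) * (1 - X ^ (c * d)) * P =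
        gg X a * gg X b * (1 - X ^ c) * (1 - X ^ d) *
          (1 - X ^ (a * b * c)) * (1 - X ^ (a * b * d)) * (1 - X ^ (a * c * d)) *
          (1 - X ^ (b * c * d))) : ∃ k, P.coeff k < 0 := by
  have hab2 : a + b - 1 < a * b := by
    have : a + b ≤ a * b := by nlinarith
    omega
  have hac2 : 2 * c ≤ a * c := by nlinarith
  have hbc2 : 2 * c ≤ b * c := by nlinarith
  have hP : ∀ k < 2 * c, ((1 - X ^ (a * b)) * P).coeff k =
      ((gg X a * gg X b : ℤ[X]) * (1 - X ^ c) * (1 - X ^ d)).coeff k := by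
    apply trunc_eq
    have h' := congrArg (Ideal.Quotient.mk (Ideal.span {(X : ℤ[X]) ^ (2 * c)})) h
    simp only [map_mul, map_sub, map_pow, map_one] at h' ⊢
    rw [trunc_pow _ (a * c) hac2,
      trunc_pow _ (a * d) (by nlinarith), trunc_pow _ (b * c) (by nlinarith),
      trunc_pow _ (b * d) (by nlinarith), trunc_pow _ (c * d) (by nlinarith),
      trunc_pow _ (a * b * c) (by nlinarith),
      trunc_pow _ (a * b * d) (by nlinarith),
      trunc_pow _ (a * c * d) (hac2.trans (Nat.le_mul_of_pos_right _ (by omega))),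
      trunc_pow _ (b * c * d) (hbc2.trans (Nat.le_mul_of_pos_right _ (by omega)))] at h'
    simpa using h'
  set g : ℤ[X] := gg X a * gg X b with hg
  set N := a * b with hN
  obtain ⟨A, hA⟩ : ∃ A : ℕ → ℤ, A = fun k => g.coeff (k % N) := ⟨_, rfl⟩
  have hA0 : ∀ k, 0 ≤ A k := fun k => by rw [hA]; exact g_nonneg a b _
  have hAs : ∀ k, A (k + N) = A k := fun k => by simp [hA]
  have hAg : ∀ k < N, A k = g.coeff k := fun k hk => by simp [hA, Nat.mod_eq_of_lt hk]
  have hgz : ∀ k, N ≤ k → g.coeff k = 0 := fun k hk => g_zero a b k (by omega)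
  have hPA : ∀ k < 2 * c, P.coeff k = A k - (if c ≤ k then A (k - c) else 0)
        - (if d ≤ k then A (k - d) else 0) := by
    have step : ∀ k, A k = g.coeff k + if N ≤ k then A (k - N) else 0 := by
      intro k
      split_ifs with hk
      · rw [hgz k hk, zero_add, ← hAs (k - N), Nat.sub_add_cancel hk]
      · rw [hAg k (by omega), add_zero]
    intro k
    induction k using Nat.strong_induction_on with
    | _ k ih =>
      intro hk
      have e := hP k hk
      rw [B_coeff _ _ _ _ (by omega), sub_mul, one_mul, mul_comm (X ^ N), coeff_sub,
        coeff_mul_X_pow'] at e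
      have s1 := step k
      have s2 := step (k - c)
      have s3 := step (k - d)
      by_cases hkN : N ≤ k
      · have i := ih (k - N) (by omega) (by omega)
        rw [show k - N - c = k - c - N by omega, show k - N - d = k - d - N by omega] at i
        split_ifs at * <;> first | omega
      · split_ifs at * <;> first | omega
  by_contra! hneg
  have hmono1 : ∀ i < N, A i ≤ A (i + c) := by
    intro i hi
    have e := hPA (i + c) (by omega)
    have p := hneg (i + c)
    rw [if_pos (by omega), Nat.add_sub_cancel] at e
    have := hA0 (i + c - d)
    split_ifs at e <;> omega
  have hmono : ∀ i, A i ≤ A (i + c) := by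
    intro i
    have := hmono1 (i % N) (Nat.mod_lt _ (by omega))
    simpa [hA] using this
  have hmono2 : ∀ m, A 1 ≤ A (1 + m * c) := by
    intro m
    induction m with
    | zero => simp
    | succ m ih =>
      have := hmono (1 + m * c)
      rw [Nat.succ_mul, ← add_assoc]; omega
  have hcop : Nat.Coprime c N := (Nat.Coprime.mul_left hac' hbc').symm
  obtain ⟨m, -, hm⟩ := Nat.exists_mul_mod_eq_one_of_coprime hcop (by omega)
  have hm2 := hmono2 (m * (N - 1))
  have hz : (1 + m * (N - 1) * c) % N = 0 := by
    rw [show m * (N - 1) * c = (c * m) * (N - 1) by ring, Nat.add_mod, Nat.mul_mod, hm, one_mul,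
      Nat.mod_mod, ← Nat.add_mod, show 1 + (N - 1) = N by omega, Nat.mod_self]
  have v0 : A (1 + m * (N - 1) * c) = 1 := by
    simp only [hA, hz, hg]
    rw [mul_coeff_zero, gg_coeff, gg_coeff, if_pos (by omega), if_pos (by omega)]; rfl
  have v1 : A 1 = 2 := by
    rw [hAg 1 (by omega), hg, mul_coeff_one]
    simp only [gg_coeff]
    rw [if_pos (by omega), if_pos (by omega), if_pos (by omega), if_pos (by omega)]; rfl
  omega

/-- For pairwise coprime integers `1 < a < b < c < d`, the rational function
`P_4 = (1-X^a)(1-X^b)(1-X^c)(1-X^d)(1-X^abc)(1-X^abd)(1-X^acd)(1-X^bcd) /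
((1-X)²(1-X^ab)(1-X^ac)(1-X^ad)(1-X^bc)(1-X^bd)(1-X^cd))` is a polynomial having
both a strictly positive and a strictly negative coefficient. -/
theorem stmt_18 (a b c d : ℕ) (ha : 1 < a) (hab : a < b) (hbc : b < c) (hcd : c < d)
    (hab' : Nat.gcd a b = 1) (hac : Nat.gcd a c = 1) (had : Nat.gcd a d = 1)
    (hbc' : Nat.gcd b c = 1) (hbd : Nat.gcd b d = 1) (hcd' : Nat.gcd c d = 1) :
    ∃ P : ℤ[X],
      ((1 - X) ^ 2 * (1 - X ^ (a * b)) * (1 - X ^ (a * c)) * (1 - X ^ (a * d)) *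
        (1 - X ^ (b * c)) * (1 - X ^ (b * d)) * (1 - X ^ (c * d))) * P =
        (1 - X ^ a) * (1 - X ^ b) * (1 - X ^ c) * (1 - X ^ d) *
          (1 - X ^ (a * b * c)) * (1 - X ^ (a * b * d)) * (1 - X ^ (a * c * d)) *
          (1 - X ^ (b * c * d)) ∧
      (∃ k, 0 < P.coeff k) ∧ (∃ k, P.coeff k < 0) := by
  obtain ⟨x1, h1⟩ := gg_two (X : ℤ[X]) a b hab'
  obtain ⟨x2, h2⟩ := gg_two (X : ℤ[X]) a c hac
  obtain ⟨x3, h3⟩ := gg_two (X : ℤ[X]) a d had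
  obtain ⟨x4, h4⟩ := gg_two (X : ℤ[X]) b c hbc'
  obtain ⟨x5, h5⟩ := gg_two (X : ℤ[X]) b d hbd
  obtain ⟨x6, h6⟩ := gg_two (X : ℤ[X]) c d hcd'
  obtain ⟨w1, k1⟩ := gg_three a b c (by omega) (by omega) (by omega) hab' hac hbc' _ _ _ h1 h2 h4
  obtain ⟨w2, k2⟩ := gg_three a b d (by omega) (by omega) (by omega) hab' had hbd _ _ _ h1 h3 h5
  obtain ⟨w3, k3⟩ := gg_three a c d (by omega) (by omega) (by omega) hac had hcd' _ _ _ h2 h3 h6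
  obtain ⟨w4, k4⟩ := gg_three b c d (by omega) (by omega) (by omega) hbc' hbd hcd' _ _ _ h4 h5 h6
  obtain ⟨P, hP⟩ : ∃ P : ℤ[X], P = gg X a * gg X b * gg X c * gg X d *
    (x1 * x2 * x3 * x4 * x5 * x6) * (w1 * w2 * w3 * w4) := ⟨_, rfl⟩
  have hmain : (1 - X ^ (a * b)) * (1 - X ^ (a * c)) * (1 - X ^ (a * d)) *
        (1 - X ^ (b * c)) * (1 - X ^ (b * d)) * (1 - X ^ (c * d)) * P =
        gg X a * gg X b * (1 - X ^ c) * (1 - X ^ d) *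
          (1 - X ^ (a * b * c)) * (1 - X ^ (a * b * d)) * (1 - X ^ (a * c * d)) *
          (1 - X ^ (b * c * d)) := by
    simp only [gg_one_sub (X : ℤ[X]), h1, h2, h3, h4, h5, h6, k1, k2, k3, k4, hP]
    ring
  refine ⟨P, ?_, ⟨0, ?_⟩, ?_⟩
  · rw [gg_one_sub (X : ℤ[X]) a, gg_one_sub (X : ℤ[X]) b]
    linear_combination (1 - X) ^ 2 * hmain
  · have := congrArg (eval 0) hmain
    have z : ∀ n : ℕ, 0 < n → (0 : ℤ) ^ n = 0 := fun n hn => zero_pow (by omega)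
    have e : ∀ n : ℕ, 0 < n → eval 0 (gg (X : ℤ[X]) n) = 1 := by
      intro n hn
      rw [← coeff_zero_eq_eval_zero, gg_coeff, if_pos hn]
    have pa : 0 < a := by omega
    have pb : 0 < b := by omega
    have pc : 0 < c := by omega
    have pd : 0 < d := by omega
    simp only [eval_mul, eval_sub, eval_one, eval_pow, eval_X] at this
    rw [e a pa, e b pb, z c pc, z d pd, z (a * b) (by positivity), z (a * c) (by positivity),
      z (a * d) (by positivity), z (b * c) (by positivity), z (b * d) (by positivity),
      z (c * d) (by positivity), z (a * b * c) (by positivity), z (a * b * d) (by positivity),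
      z (a * c * d) (by positivity), z (b * c * d) (by positivity)] at this
    rw [coeff_zero_eq_eval_zero]
    simp at this
    omega
  · rcases lt_or_ge c (a * b) with hc | hc
    · exact neg_case1 a b c d ha hab hbc hcd hc P hmain
    · exact neg_case2 a b c d ha hab hbc hcd hac hbc' hc P hmain
end

section
/- Let a and b be integers with 1 < a < b, and consider the formal power series P_0(X) = (1+X+⋯+X^{a−1})(1+X+⋯+X^{b−1}) · Σ_{k≥0} X^{kab}, with coefficients b_k (so P_0 = (1−X^a)(1−X^b)/((1−X)^2(1−X^{ab})) as a power series). Then for every k ≥ 0: (i) 0 ≤ b_k ≤ a; (ii) b_k = a if and only if the remainder r of k modulo ab satisfies a−1 ≤ r ≤ b−1; (iii) b_k = 0 if and only if the remainder r of k modulo ab satisfies a+b−1 ≤ r ≤ ab−1. -/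
lemma aux_d (a b : ℕ) (ha : 1 < a) (hb : a < b) (n : ℕ) :
    PowerSeries.coeff n ((∑ i ∈ Finset.range b, (PowerSeries.X : PowerSeries ℤ) ^ i) *
      PowerSeries.mk (fun k => if a * b ∣ k then (1 : ℤ) else 0)) =
    if n % (a * b) < b then 1 else 0 := by
  have hbab : b ≤ a * b := Nat.le_mul_of_pos_left b (by omega)
  rw [Finset.sum_mul, map_sum]
  have : ∀ j ∈ Finset.range b, PowerSeries.coeff n ((PowerSeries.X : PowerSeries ℤ) ^ j *
      PowerSeries.mk (fun k => if a * b ∣ k then (1 : ℤ) else 0)) =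
      if n % (a * b) = j then 1 else 0 := by
    intro j hj
    have hj := Finset.mem_range.1 hj
    rw [PowerSeries.coeff_X_pow_mul', PowerSeries.coeff_mk, ← ite_and]
    congr 1
    apply propext
    constructor
    · rintro ⟨h1, c, hc⟩
      have : n = j + a * b * c := by omega
      rw [this, Nat.add_mul_mod_self_left, Nat.mod_eq_of_lt (by omega)]
    · rintro rfl
      exact ⟨Nat.mod_le _ _, Nat.dvd_sub_mod n⟩
  rw [Finset.sum_congr rfl this, Finset.sum_ite_eq]
  simp

lemma aux_c (a b : ℕ) (ha : 1 < a) (hb : a < b) (k : ℕ) :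
    PowerSeries.coeff k ((∑ i ∈ Finset.range a, (PowerSeries.X : PowerSeries ℤ) ^ i) *
      (∑ i ∈ Finset.range b, (PowerSeries.X : PowerSeries ℤ) ^ i) *
      PowerSeries.mk (fun k => if a * b ∣ k then (1 : ℤ) else 0)) =
    (((Finset.range a).filter
      (fun i => i ≤ k % (a * b) ∧ k % (a * b) < b + i)).card : ℤ) := by
  have hbab : a + b ≤ a * b + 1 := by nlinarith
  rw [mul_assoc, Finset.sum_mul, map_sum, Finset.card_filter, Nat.cast_sum]
  apply Finset.sum_congr rfl
  intro i hi
  have hi := Finset.mem_range.1 hi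
  rw [PowerSeries.coeff_X_pow_mul', aux_d a b ha hb, ← ite_and, Nat.cast_ite, Nat.cast_one,
    Nat.cast_zero]
  congr 1
  apply propext
  have hr : k % (a * b) < a * b := Nat.mod_lt _ (by omega)
  have hk := Nat.mod_add_div k (a * b)
  generalize k % (a * b) = r at *
  generalize hq : k / (a * b) = q at *
  by_cases hir : i ≤ r
  · have : k - i = (r - i) + a * b * q := by omega
    rw [this, Nat.add_mul_mod_self_left, Nat.mod_eq_of_lt (by omega)]
    omega
  · constructor
    · rintro ⟨h1, h2⟩
      exfalso
      obtain _ | q := q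
      · simp at hk; omega
      · have : k - i = (a * b + r - i) + a * b * q := by
          rw [Nat.mul_succ] at hk; omega
        rw [this, Nat.add_mul_mod_self_left, Nat.mod_eq_of_lt (by omega)] at h2
        omega
    · rintro ⟨h, _⟩; exact absurd h hir

/-- For integers `1 < a < b`, the coefficients `b_k` of the formal power series
`P_0 = (1+X+⋯+X^(a-1))(1+X+⋯+X^(b-1)) ⬝ Σ_{k≥0} X^(kab)` in `ℤ⟦X⟧` satisfy, with
`r = k % (ab)`: (i) `0 ≤ b_k ≤ a`; (ii) `b_k = a ↔ a-1 ≤ r ≤ b-1`;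
(iii) `b_k = 0 ↔ a+b-1 ≤ r ≤ ab-1`. -/
theorem stmt_19 (a b : ℕ) (ha : 1 < a) (hb : a < b)
    (P0 : PowerSeries ℤ)
    (hP0 : P0 = (∑ i ∈ Finset.range a, (PowerSeries.X : PowerSeries ℤ) ^ i) *
      (∑ i ∈ Finset.range b, (PowerSeries.X : PowerSeries ℤ) ^ i) *
      PowerSeries.mk (fun k => if a * b ∣ k then (1 : ℤ) else 0))
    (k : ℕ) :
    (0 ≤ PowerSeries.coeff k P0 ∧ PowerSeries.coeff k P0 ≤ (a : ℤ)) ∧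
    (PowerSeries.coeff k P0 = (a : ℤ) ↔
      a - 1 ≤ k % (a * b) ∧ k % (a * b) ≤ b - 1) ∧
    (PowerSeries.coeff k P0 = 0 ↔
      a + b - 1 ≤ k % (a * b) ∧ k % (a * b) ≤ a * b - 1) := by
  subst hP0
  rw [aux_c a b ha hb k]
  have hr : k % (a * b) < a * b := Nat.mod_lt _ (Nat.mul_pos (by omega) (by omega))
  generalize k % (a * b) = r at *
  have hle := Finset.card_filter_le (Finset.range a) (fun i => i ≤ r ∧ r < b + i)
  rw [Finset.card_range] at hle
  refine ⟨⟨by positivity, by exact_mod_cast hle⟩, ?_, ?_⟩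
  · rw [Nat.cast_inj]
    have := Finset.card_filter_eq_iff (s := Finset.range a) (p := fun i => i ≤ r ∧ r < b + i)
    rw [Finset.card_range] at this
    rw [this]
    constructor
    · intro h
      have h0 := h 0 (by simp; omega)
      have h1 := h (a - 1) (by simp; omega)
      omega
    · intro h i hi
      have hi := Finset.mem_range.1 hi
      omega
  · rw [Nat.cast_eq_zero, Finset.card_eq_zero, Finset.filter_eq_empty_iff]
    constructor
    · intro h
      refine ⟨?_, by omega⟩
      by_contra hlt
      by_cases hra : r < a
      · exact h (Finset.mem_range.2 hra) ⟨le_refl _, by omega⟩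
      · exact h (x := a - 1) (Finset.mem_range.2 (by omega)) ⟨by omega, by omega⟩
    · intro h i hi
      have hi := Finset.mem_range.1 hi
      omega
end
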